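/- arXiv:1308.6693 — 2 statements merged into one kernel-verified Lean document; each statement's English description precedes it below -/
import Mathlib

section
/- Let Γ be a flat visibility representation of a finite simple planar graph G. Then there exists a planar straight-line drawing Γ' of G with the same y-coordinates as Γ (the point of every vertex in Γ' has y-coordinate equal to the y-coordinate of that vertex's horizontal segment in Γ) and the same left-to-right order in each row as Γ. In particular, Γ' has the same height as Γ. -/
open Set

/-- A point in the plane. -/
abbrev Pt : Type := ℝ × ℝ

/-- A point has integer coordinates. -/
def IsIntPt (p : Pt) : Prop := (∃ a : ℤ, p.1 = (a : ℝ)) ∧ (∃ b : ℤ, p.2 = (b : ℝ))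

/-- The (closed) segments of a polygonal chain, as pairs of consecutive corners. -/
def chainSegs (l : List Pt) : List (Pt × Pt) := l.zip l.tail

/-- The set of points covered by a polygonal chain. -/
def chainSet (l : List Pt) : Set Pt := ⋃ s ∈ chainSegs l, segment ℝ s.1 s.2

/-- A polygonal chain is simple (non-self-intersecting): it has at least two
corners, all corners are distinct, and two of its segments meet only if they are
consecutive, and then only in their shared corner. -/
def IsSimpleChain (l : List Pt) : Prop :=
  2 ≤ l.length ∧ l.Nodup ∧
    ∀ i j : ℕ, i < j → ∀ (hi : i < (chainSegs l).length) (hj : j < (chainSegs l).length),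
      segment ℝ ((chainSegs l).get ⟨i, hi⟩).1 ((chainSegs l).get ⟨i, hi⟩).2 ∩
        segment ℝ ((chainSegs l).get ⟨j, hj⟩).1 ((chainSegs l).get ⟨j, hj⟩).2 ⊆
        if j = i + 1 then {((chainSegs l).get ⟨j, hj⟩).1} else (∅ : Set Pt)

/-- Every interior corner of the chain is a genuine bend (a direction change). -/
def GenuineBends (l : List Pt) : Prop :=
  ∀ i : ℕ, ∀ h : i + 2 < l.length,
    ¬ Collinear ℝ ({l.get ⟨i, by omega⟩, l.get ⟨i + 1, by omega⟩, l.get ⟨i + 2, h⟩} : Set Pt)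

/-- The chain is a y-monotone path (horizontal segments allowed). -/
def IsMonoChain (l : List Pt) : Prop :=
  (l.map Prod.snd).Chain' (· ≤ ·) ∨ (l.map Prod.snd).Chain' (fun a b => b ≤ a)

/-- All segments of the chain are horizontal or vertical. -/
def IsOrthoChain (l : List Pt) : Prop :=
  ∀ s ∈ chainSegs l, s.1.1 = s.2.1 ∨ s.1.2 = s.2.2

/-- A poly-line drawing of a graph `G`: every vertex is a point, and every edge
`uv` is the polygonal chain through the list `bends u v` of bend points
(listed in order from `u` to `v`). -/
structure PolylineDrawing {V : Type*} (G : SimpleGraph V) where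
  pos : V → Pt
  bends : V → V → List Pt
  bends_symm : ∀ u v, bends v u = (bends u v).reverse

namespace PolylineDrawing

variable {V : Type*} {G : SimpleGraph V}

/-- The corner list of the curve of edge `uv`. -/
def chain (D : PolylineDrawing G) (u v : V) : List Pt :=
  D.pos u :: (D.bends u v ++ [D.pos v])

/-- The set of points of the curve of edge `uv`. -/
def curve (D : PolylineDrawing G) (u v : V) : Set Pt := chainSet (D.chain u v)

/-- The defining elements of the drawing: vertex points and bends. -/
def points (D : PolylineDrawing G) : Set Pt :=
  Set.range D.pos ∪ ⋃ (u) (v) (_ : G.Adj u v), {p | p ∈ D.bends u v}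

/-- The drawing is planar: vertex points are pairwise distinct, every edge curve
is a simple chain whose interior corners are genuine bends, an edge curve contains
no vertex point other than its endpoints, and two distinct edge curves intersect
only in points of common endpoints. -/
def IsPlanar (D : PolylineDrawing G) : Prop :=
  Function.Injective D.pos ∧
  (∀ u v, G.Adj u v → IsSimpleChain (D.chain u v) ∧ GenuineBends (D.chain u v)) ∧
  (∀ u v w, G.Adj u v → w ≠ u → w ≠ v → D.pos w ∉ D.curve u v) ∧
  (∀ u v x y, G.Adj u v → G.Adj x y → s(u, v) ≠ s(x, y) →
    D.curve u v ∩ D.curve x y ⊆ D.pos '' (({u, v} : Set V) ∩ ({x, y} : Set V)))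

/-- All defining elements have integer coordinates. -/
def IntCoords (D : PolylineDrawing G) : Prop := ∀ p ∈ D.points, IsIntPt p

/-- A straight-line drawing: no edge has bends. -/
def IsStraightLine (D : PolylineDrawing G) : Prop := ∀ u v : V, D.bends u v = []

/-- Every edge curve is a y-monotone path. -/
def IsYMonotone (D : PolylineDrawing G) : Prop :=
  ∀ u v, G.Adj u v → IsMonoChain (D.chain u v)

/-- The drawing fits (after translation) in the rows `1, …, h`. -/
def InHeight (D : PolylineDrawing G) (h : ℕ) : Prop :=
  ∃ y0 : ℤ, ∀ p ∈ D.points, (y0 : ℝ) ≤ p.2 ∧ p.2 ≤ (y0 : ℝ) + (h : ℝ) - 1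

/-- The drawing fits (after translation) in the columns `1, …, w`. -/
def InWidth (D : PolylineDrawing G) (w : ℕ) : Prop :=
  ∃ x0 : ℤ, ∀ p ∈ D.points, (x0 : ℝ) ≤ p.1 ∧ p.1 ≤ (x0 : ℝ) + (w : ℝ) - 1

end PolylineDrawing

/-- An axis-parallel box (possibly degenerated to a segment or a point). -/
structure Box where
  x1 : ℝ
  x2 : ℝ
  y1 : ℝ
  y2 : ℝ
  hx : x1 ≤ x2
  hy : y1 ≤ y2

/-- The set of points of a box. -/
def Box.pts (b : Box) : Set Pt := Set.Icc b.x1 b.x2 ×ˢ Set.Icc b.y1 b.y2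

/-- An orthogonal drawing of a graph `G`: every vertex is an axis-aligned box, and
every edge `uv` is an axis-parallel polygonal chain `chain u v` (its first corner is
the attachment point on the box of `u`, its last corner the attachment point on the
box of `v`). -/
structure OrthDrawing {V : Type*} (G : SimpleGraph V) where
  box : V → Box
  chain : V → V → List Pt
  chain_symm : ∀ u v, chain v u = (chain u v).reverse

namespace OrthDrawing

variable {V : Type*} {G : SimpleGraph V}

/-- The set of points of the curve of edge `uv`. -/
def curve (D : OrthDrawing G) (u v : V) : Set Pt := chainSet (D.chain u v)

/-- The defining elements of the drawing: corners of vertex boxes, and corners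
(attachment points and bends) of edge chains. -/
def points (D : OrthDrawing G) : Set Pt :=
  (⋃ v, ({((D.box v).x1, (D.box v).y1), ((D.box v).x1, (D.box v).y2),
          ((D.box v).x2, (D.box v).y1), ((D.box v).x2, (D.box v).y2)} : Set Pt)) ∪
    ⋃ (u) (v) (_ : G.Adj u v), {p | p ∈ D.chain u v}

/-- All points covered by the drawing (boxes and edge curves). -/
def region (D : OrthDrawing G) : Set Pt :=
  (⋃ v, (D.box v).pts) ∪ ⋃ (u) (v) (_ : G.Adj u v), D.curve u v

/-- The drawing is planar: vertex boxes are pairwise disjoint; every edge curve is a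
simple axis-parallel chain, with genuine bends, joining the boxes of its endpoints;
an edge curve meets a vertex box only in its attachment points; and two distinct
edge curves intersect only in common endpoints. -/
def IsPlanar (D : OrthDrawing G) : Prop :=
  (∀ u v : V, u ≠ v → Disjoint (D.box u).pts (D.box v).pts) ∧
  (∀ u v, G.Adj u v → IsSimpleChain (D.chain u v) ∧ IsOrthoChain (D.chain u v) ∧
      GenuineBends (D.chain u v)) ∧
  (∀ u v, G.Adj u v → ∃ p q l, D.chain u v = p :: (l ++ [q]) ∧
      p ∈ (D.box u).pts ∧ q ∈ (D.box v).pts) ∧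
  (∀ u v w, G.Adj u v → D.curve u v ∩ (D.box w).pts ⊆
      {p | (w = u ∧ (D.chain u v).head? = some p) ∨
           (w = v ∧ (D.chain u v).getLast? = some p)}) ∧
  (∀ u v x y, G.Adj u v → G.Adj x y → s(u, v) ≠ s(x, y) →
      D.curve u v ∩ D.curve x y ⊆
        {p | ((D.chain u v).head? = some p ∨ (D.chain u v).getLast? = some p) ∧
             ((D.chain x y).head? = some p ∨ (D.chain x y).getLast? = some p)})

/-- A flat drawing: every vertex box is degenerated to a horizontal segment. -/
def IsFlat (D : OrthDrawing G) : Prop := ∀ v, (D.box v).y1 = (D.box v).y2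

/-- A visibility representation: an orthogonal drawing without bends, i.e. every
edge is a single horizontal or vertical segment. -/
def IsVR (D : OrthDrawing G) : Prop := ∀ u v, G.Adj u v → (D.chain u v).length = 2

/-- Every edge curve is a y-monotone path. -/
def IsYMonotone (D : OrthDrawing G) : Prop := ∀ u v, G.Adj u v → IsMonoChain (D.chain u v)

/-- All defining elements have integer coordinates. -/
def IntCoords (D : OrthDrawing G) : Prop := ∀ p ∈ D.points, IsIntPt p

/-- The drawing fits (after translation) in the rows `1, …, h`. -/
def InHeight (D : OrthDrawing G) (h : ℕ) : Prop :=
  ∃ y0 : ℤ, ∀ p ∈ D.points, (y0 : ℝ) ≤ p.2 ∧ p.2 ≤ (y0 : ℝ) + (h : ℝ) - 1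

/-- The drawing fits (after translation) in the columns `1, …, w`. -/
def InWidth (D : OrthDrawing G) (w : ℕ) : Prop :=
  ∃ x0 : ℤ, ∀ p ∈ D.points, (x0 : ℝ) ≤ p.1 ∧ p.1 ≤ (x0 : ℝ) + (w : ℝ) - 1

end OrthDrawing

structure VCfg (V : Type) where
  y : V → ℤ
  l : V → ℤ
  h : V → ℤ
  E : V → V → Prop
  p : V → V → ℤ
  hlr : ∀ v, l v ≤ h v
  hE : ∀ u v, E u v → y u < y v ∧ l u ≤ p u v ∧ p u v ≤ h u ∧ l v ≤ p u v ∧ p u v ≤ h v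
  hdisj : ∀ u v, u ≠ v → y u = y v → h u < l v ∨ h v < l u
  hcross : ∀ u v w, E u v → y u < y w → y w < y v → p u v < l w ∨ h w < p u v
  hee : ∀ u v u' v', E u v → E u' v' → p u v = p u' v' → y u < y v' → y u' < y v →
    (u = u' ∧ v = v')

namespace VCfg

variable {V : Type} (C : VCfg V)

/-- column `k` (just right of abscissa `k`) is not strictly inside a vertex in row `r`. -/
def Gap (r k : ℤ) : Prop := ∀ w, C.y w = r → ¬ (C.l w ≤ k ∧ k < C.h w)

theorem gap_right (w : V) : C.Gap (C.y w) (C.h w) := by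
  intro v hv hk
  have := C.hlr w
  by_cases e : v = w
  · subst e; omega
  · rcases C.hdisj v w e hv with h | h <;> omega

theorem gap_left (w : V) : C.Gap (C.y w) (C.l w - 1) := by
  intro v hv hk
  have := C.hlr w
  by_cases e : v = w
  · subst e; omega
  · rcases C.hdisj v w e hv with h | h <;> omega

theorem gap_edge {u v : V} (he : C.E u v) {r : ℤ} (h1 : C.y u < r) (h2 : r < C.y v) :
    C.Gap r (C.p u v) := by
  intro w hw hk
  rcases C.hcross u v w he (by omega) (by omega) with h | h <;> omega

theorem gap_edge' {u v : V} (he : C.E u v) {r : ℤ} (h1 : C.y u < r) (h2 : r < C.y v) :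
    C.Gap r (C.p u v - 1) := by
  intro w hw hk
  rcases C.hcross u v w he (by omega) (by omega) with h | h <;> omega

section phi

variable (Φ : ℤ → ℤ → ℝ)
  (hstep : ∀ r k, Φ r (k - 1) = Φ r k ∨ ∃ u v, C.E u v ∧ C.p u v = k ∧ C.y u < r ∧ r < C.y v)
  (hconv : ∀ r k, C.Gap r k → 0 ≤ Φ (r + 1) k + Φ (r - 1) k - 2 * Φ r k)

include hstep in
theorem phi_vertex (w : V) (k : ℤ) (h1 : C.l w - 1 ≤ k) (h2 : k ≤ C.h w) :
    Φ (C.y w) k = Φ (C.y w) (C.h w) := by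
  obtain ⟨n, hn⟩ : ∃ n : ℕ, C.h w = k + n := ⟨(C.h w - k).toNat, by omega⟩
  induction n generalizing k with
  | zero => simp at hn; rw [hn]
  | succ n ih =>
    rw [← ih (k + 1) (by omega) (by push_cast at hn; omega) (by push_cast at hn; omega)]
    rcases hstep (C.y w) (k + 1) with h | ⟨u, v, he, hp, hu, hv⟩
    · simpa using h
    · push_cast at hn
      rcases C.hcross u v w he hu hv with h | h <;> omega

include hstep hconv in
theorem phi_nonpos (R K : ℤ) (hR1 : ∀ r k, r ≤ -R → Φ r k = 0) (hR2 : ∀ r k, R ≤ r → Φ r k = 0)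
    (hK1 : ∀ r k, k ≤ -K → Φ r k = 0) (hK2 : ∀ r k, K ≤ k → Φ r k = Φ r K)
    (hKh : ∀ w, C.h w ≤ K) (r k : ℤ) : Φ r k ≤ 0 := by
  by_contra hpos
  push Not at hpos
  -- the finite box
  let S : Finset (ℤ × ℤ) := Finset.Icc (-R) R ×ˢ Finset.Icc (-K) K
  have hmem : ∀ r k, 0 < Φ r k → k ≤ K → (r, k) ∈ S := by
    intro r k h hk
    simp only [S, Finset.mem_product, Finset.mem_Icc]
    refine ⟨⟨?_, ?_⟩, ?_, hk⟩
    · by_contra h'; rw [hR1 r k (by omega)] at h; exact lt_irrefl _ h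
    · by_contra h'; rw [hR2 r k (by omega)] at h; exact lt_irrefl _ h
    · by_contra h'; rw [hK1 r k (by omega)] at h; exact lt_irrefl _ h
  have hclamp : ∃ k' ≤ K, Φ r k' = Φ r k := by
    by_cases h : k ≤ K
    · exact ⟨k, h, rfl⟩
    · exact ⟨K, le_rfl, (hK2 r k (by omega)).symm⟩
  obtain ⟨k0, hk0, e0⟩ := hclamp
  rw [← e0] at hpos
  obtain ⟨q, hq, hmax⟩ := S.exists_max_image (fun q => Φ q.1 q.2) ⟨_, hmem r k0 hpos hk0⟩
  have hm : 0 < Φ q.1 q.2 := lt_of_lt_of_le hpos (hmax _ (hmem r k0 hpos hk0))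
  have hub : ∀ r k, k ≤ K → Φ r k ≤ Φ q.1 q.2 := by
    intro r k hk
    by_cases h : 0 < Φ r k
    · exact hmax _ (hmem r k h hk)
    · push Not at h; linarith
  -- climbing
  have climb : ∀ n : ℕ, ∃ k ≤ K, Φ (q.1 + n) k = Φ q.1 q.2 := by
    intro n
    induction n with
    | zero => 
      refine ⟨q.2, ?_, by simp⟩
      have := hq
      simp only [S, Finset.mem_product, Finset.mem_Icc] at this
      exact this.2.2
    | succ n ih =>
      obtain ⟨k, hk, e⟩ := ih
      have key : ∀ k ≤ K, C.Gap (q.1 + n) k → Φ (q.1 + n) k = Φ q.1 q.2 →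
          ∃ k ≤ K, Φ (q.1 + (n + 1 : ℕ)) k = Φ q.1 q.2 := by
        intro k hk hg e
        refine ⟨k, hk, ?_⟩
        have h1 := hconv _ _ hg
        have h2 := hub (q.1 + n + 1) k hk
        have h3 := hub (q.1 + n - 1) k hk
        push_cast
        rw [← add_assoc]
        linarith
      by_cases hg : C.Gap (q.1 + n) k
      · exact key k hk hg e
      · unfold Gap at hg
        push Not at hg
        obtain ⟨w, hw, h1, h2⟩ := hg
        refine key (C.h w) (hKh w) (hw ▸ C.gap_right w) ?_
        rw [← e, ← hw]
        exact (C.phi_vertex Φ hstep w k (by omega) (by omega)).symm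
  obtain ⟨k, -, e⟩ := climb ((R - q.1).toNat)
  rw [hR2 _ _ (by omega)] at e
  linarith

include hstep hconv in
theorem phi_zero (hnp : ∀ r k, Φ r k ≤ 0) (K : ℤ) (hK1 : ∀ r k, k ≤ K → Φ r k = 0) :
    ∀ r k, Φ r k = 0 := by
  by_contra hne
  push Not at hne
  obtain ⟨r0, kk, hne⟩ := hne
  have hlt : Φ r0 kk < 0 := lt_of_le_of_ne (hnp _ _) hne
  let N : ℤ → ℤ → Prop := fun r k => Φ r k < 0 ∨ Φ (r + 1) k < 0
  have g1 : ∀ r k, C.Gap r k → N r k → Φ r k < 0 := by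
    rintro r k hg (h | h)
    · exact h
    · have := hconv r k hg; have := hnp (r - 1) k; linarith
  have g2 : ∀ r k, C.Gap (r + 1) k → N r k → Φ (r + 1) k < 0 := by
    rintro r k hg (h | h)
    · have := hconv (r + 1) k hg; have := hnp (r + 1 + 1) k
      rw [show r + 1 - 1 = r by ring] at *; linarith
    · exact h
  have g3 : ∀ r k, C.Gap (r + 1) k → (N r k ↔ N (r + 1) k) := fun r k hg =>
    ⟨fun h => Or.inl (g2 r k hg h), fun h => Or.inr (g1 _ k hg h)⟩
  have hz : ∀ r k, ¬ N r k → Φ r k = 0 ∧ Φ (r + 1) k = 0 := by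
    intro r k h
    simp only [N, not_or, not_lt] at h
    exact ⟨le_antisymm (hnp _ _) h.1, le_antisymm (hnp _ _) h.2⟩
  -- horizontal boundary
  have hb : ∀ r k, ¬ (N r (k - 1) ↔ N r k) →
      ∃ u v, C.E u v ∧ C.p u v = k ∧ C.y u ≤ r ∧ r < C.y v := by
    intro r k h
    by_contra hc
    push Not at hc
    apply h
    have e1 : Φ r (k - 1) = Φ r k := by
      rcases hstep r k with h | ⟨u, v, he, hp, h1, h2⟩
      · exact h
      · have := hc u v he hp (by omega); omega
    have e2 : Φ (r + 1) (k - 1) = Φ (r + 1) k := by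
      rcases hstep (r + 1) k with h | ⟨u, v, he, hp, h1, h2⟩
      · exact h
      · have := hc u v he hp (by omega); omega
    simp only [N, e1, e2]
  -- status constant along an edge side
  have along : ∀ u v, C.E u v → ∀ c, (c = C.p u v ∨ c = C.p u v - 1) →
      ∀ r, C.y u ≤ r → r < C.y v → (N (C.y u) c ↔ N r c) := by
    intro u v he c hc r h1 h2
    obtain ⟨n, hn⟩ : ∃ n : ℕ, r = C.y u + n := ⟨(r - C.y u).toNat, by omega⟩
    subst hn
    induction n with
    | zero => simp
    | succ n ih =>
      push_cast at *
      rw [ih (by omega) (by omega), ← add_assoc]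
      apply g3
      rcases hc with rfl | rfl
      · exact C.gap_edge he (by omega) (by omega)
      · exact C.gap_edge' he (by omega) (by omega)
  -- endpoints of an edge with a zero side are zero
  have ends : ∀ u v, C.E u v → ∀ c, (c = C.p u v ∨ c = C.p u v - 1) → ¬ N (C.y u) c →
      Φ (C.y u) (C.h u) = 0 ∧ Φ (C.y v) (C.h v) = 0 := by
    intro u v he c hc hn
    have hE := C.hE u v he
    have hn2 : ¬ N (C.y v - 1) c := by
      rwa [← along u v he c hc _ (by omega) (by omega)]
    have a1 := (hz _ _ hn).1
    have a2 := (hz _ _ hn2).2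
    rw [sub_add_cancel] at a2
    rw [C.phi_vertex Φ hstep u c (by omega) (by omega)] at a1
    rw [C.phi_vertex Φ hstep v c (by omega) (by omega)] at a2
    exact ⟨a1, a2⟩
  -- leftmost negative column
  have hex : ∃ k, N r0 k ∧ ¬ N r0 (k - 1) := by
    by_contra hc
    push Not at hc
    have : ∀ n : ℕ, N r0 (kk - n) := by
      intro n
      induction n with
      | zero => simpa using Or.inl hlt
      | succ n ih =>
        have := hc _ ih
        push_cast
        rwa [show kk - (n + 1 : ℤ) = kk - n - 1 by ring]
    have := this (kk - K).toNat
    rcases this with h | h <;> rw [hK1 _ _ (by omega)] at h <;> exact lt_irrefl _ h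
  obtain ⟨k, hk1, hk2⟩ := hex
  obtain ⟨a, b, he, rfl, ha, hbb⟩ := hb r0 k (by tauto)
  have hE := C.hE a b he
  have n1 : N (C.y a) (C.p a b) := (along a b he _ (Or.inl rfl) r0 ha hbb).2 hk1
  have n2 : ¬ N (C.y a) (C.p a b - 1) := fun h => hk2 ((along a b he _ (Or.inr rfl) r0 ha hbb).1 h)
  obtain ⟨za, zb⟩ := ends a b he _ (Or.inr rfl) n2
  have nra : ¬ N (C.y a) (C.h a) := by
    intro h
    have := g1 _ _ (C.gap_right a) h
    linarith
  -- first nonnegative column to the right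
  have hex2 : ∃ m : ℕ, ¬ N (C.y a) (C.p a b + m) :=
    ⟨(C.h a - C.p a b).toNat, by
      rwa [show C.p a b + ((C.h a - C.p a b).toNat : ℤ) = C.h a by omega]⟩
  classical
  obtain ⟨m, hm, hmin⟩ : ∃ m : ℕ, ¬ N (C.y a) (C.p a b + m) ∧
      ∀ i < m, N (C.y a) (C.p a b + i) :=
    ⟨Nat.find hex2, Nat.find_spec hex2, fun i hi => not_not.1 (Nat.find_min hex2 hi)⟩
  have hm0 : m ≠ 0 := by
    rintro rfl; simp at hm; exact hm n1
  have hmr : C.p a b + m ≤ C.h a := by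
    by_contra h
    have := hmin (C.h a - C.p a b).toNat (by omega)
    rw [show C.p a b + ((C.h a - C.p a b).toNat : ℤ) = C.h a by omega] at this
    exact nra this
  have hprev : N (C.y a) (C.p a b + m - 1) := by
    have := hmin (m - 1) (by omega)
    rwa [show C.p a b + ((m - 1 : ℕ) : ℤ) = C.p a b + m - 1 by omega] at this
  obtain ⟨a', c, he', hp', ha', hc'⟩ := hb (C.y a) (C.p a b + m) (by tauto)
  have hE' := C.hE a' c he'
  have haa : a' = a := by
    by_contra hne
    rcases lt_or_eq_of_le ha' with h | h
    · rcases C.hcross a' c a he' h hc' with h | h <;> omega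
    · rcases C.hdisj a' a hne h with h | h <;> omega
  subst haa
  rw [← hp'] at hm
  obtain ⟨-, zc⟩ := ends a' c he' _ (Or.inl rfl) hm
  -- fill
  have fill : ∀ n : ℕ, C.y a' + n < C.y b → C.y a' + n < C.y c →
      ∀ i, C.p a' b ≤ i → i < C.p a' c → N (C.y a' + n) i := by
    intro n
    induction n with
    | zero =>
      intro _ _ i h1 h2
      have := hmin (i - C.p a' b).toNat (by omega)
      rw [show C.p a' b + ((i - C.p a' b).toNat : ℤ) = i by omega] at this
      simpa using this
    | succ n ih =>
      intro hb1 hc1 i h1 h2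
      push_cast at *
      rw [← add_assoc] at *
      by_cases hg : C.Gap (C.y a' + n + 1) i
      · exact (g3 _ _ hg).1 (ih (by omega) (by omega) i h1 h2)
      · unfold Gap at hg
        push Not at hg
        obtain ⟨w, hw, hl, hh⟩ := hg
        have c1 := C.hcross a' b w he (by omega) (by omega)
        have c2 := C.hcross a' c w he' (by omega) (by omega)
        have hneg := ih (by omega) (by omega) (C.l w - 1) (by omega) (by omega)
        have hg2 := C.gap_left w
        rw [hw] at hg2
        have h3 := g2 _ _ hg2 hneg
        left
        rw [← hw] at h3 ⊢
        rw [C.phi_vertex Φ hstep w i (by omega) (by omega)]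
        rwa [C.phi_vertex Φ hstep w (C.l w - 1) (by omega) (by have := C.hlr w; omega)] at h3
  have hlt : C.p a' b < C.p a' c := by omega
  rcases le_or_gt (C.y b) (C.y c) with hle | hgt
  · have hr : C.h b < C.p a' c := by
      rcases lt_or_eq_of_le hle with h | h
      · rcases C.hcross a' c b he' hE.1 h with h | h <;> omega
      · by_cases e : b = c
        · subst e; omega
        · rcases C.hdisj b c e h with h | h <;> omega
    have := fill (C.y b - 1 - C.y a').toNat (by omega) (by omega) (C.h b) (by omega) hr
    rw [show C.y a' + ((C.y b - 1 - C.y a').toNat : ℤ) = C.y b - 1 by omega] at this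
    have h3 := g2 (C.y b - 1) (C.h b) (by rw [sub_add_cancel]; exact C.gap_right b) this
    rw [sub_add_cancel] at h3
    linarith
  · have hr : C.p a' b < C.l c := by
      rcases C.hcross a' b c he hE'.1 hgt with h | h <;> omega
    have := fill (C.y c - 1 - C.y a').toNat (by omega) (by omega) (C.l c - 1) (by omega) (by omega)
    rw [show C.y a' + ((C.y c - 1 - C.y a').toNat : ℤ) = C.y c - 1 by omega] at this
    have h3 := g2 (C.y c - 1) (C.l c - 1) (by rw [sub_add_cancel]; exact C.gap_left c) this
    rw [sub_add_cancel, C.phi_vertex Φ hstep c _ (by omega) (by have := C.hlr c; omega)] at h3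
    linarith

end phi
/-- Gordan's theorem of the alternative. -/
theorem gordan {ι W : Type} [Fintype ι] [Fintype W] (f : ι → W → ℝ) :
    (∃ X : W → ℝ, ∀ i, 0 < ∑ w, X w * f i w) ∨
    (∃ c : ι → ℝ, (∀ i, 0 ≤ c i) ∧ ∑ i, c i = 1 ∧ ∀ w, ∑ i, c i * f i w = 0) := by
  classical
  by_cases h0 : (0 : W → ℝ) ∈ convexHull ℝ (Set.range f)
  · right
    rw [convexHull_range_eq_exists_affineCombination] at h0
    obtain ⟨s, c, hc0, hc1, hc⟩ := h0
    rw [s.affineCombination_eq_linear_combination _ _ hc1] at hc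
    refine ⟨fun i => if i ∈ s then c i else 0, ?_, ?_, ?_⟩
    · intro i
      by_cases hi : i ∈ s
      · simp [hi, hc0 i hi]
      · simp [hi]
    · simpa using hc1
    · intro w
      have := congrFun hc w
      simpa [Finset.sum_apply] using this
  · left
    obtain ⟨g, u, hu0, hu⟩ := geometric_hahn_banach_point_closed (convex_convexHull ℝ (Set.range f))
      ((Set.finite_range f).isClosed_convexHull ℝ) h0
    refine ⟨fun w => g (Pi.single w 1), fun i => ?_⟩
    have h1 := hu (f i) (subset_convexHull ℝ _ ⟨i, rfl⟩)
    have h2 := LinearMap.pi_apply_eq_sum_univ g.toLinearMap (f i)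
    simp only [smul_eq_mul, ContinuousLinearMap.coe_coe] at h2
    rw [map_zero] at hu0
    have h3 : ∑ w, g (Pi.single w 1) * f i w = g (f i) := by
      rw [h2]
      refine Finset.sum_congr rfl fun w _ => ?_
      rw [mul_comm]
      congr 2
      funext z
      simp [Pi.single_apply, eq_comm]
    simp only
    rw [h3]
    linarith

open Classical in
/-- left end of an item (a pair `(u,u)` is a vertex, otherwise an edge). -/
noncomputable def lo (A : V × V) : ℤ := if A.1 = A.2 then C.l A.1 else C.p A.1 A.2

open Classical in
noncomputable def hi (A : V × V) : ℤ := if A.1 = A.2 then C.h A.1 else C.p A.1 A.2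

def Item (j : ℤ) (A : V × V) : Prop :=
  (A.1 = A.2 ∧ C.y A.1 = j) ∨ (C.E A.1 A.2 ∧ C.y A.1 < j ∧ j < C.y A.2)

noncomputable def tt (j : ℝ) (A : V × V) : ℝ :=
  (j - C.y A.1) / ((C.y A.2 : ℝ) - C.y A.1)

noncomputable def posR (X : V → ℝ) (j : ℝ) (A : V × V) : ℝ :=
  X A.1 + C.tt j A * (X A.2 - X A.1)

open Classical in
noncomputable def coef (j : ℝ) (A : V × V) (w : V) : ℝ :=
  (if w = A.1 then 1 - C.tt j A else 0) + (if w = A.2 then C.tt j A else 0)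

theorem sum_coef [Fintype V] (X : V → ℝ) (j : ℝ) (A : V × V) :
    ∑ w, X w * C.coef j A w = C.posR X j A := by
  classical
  simp only [coef, posR, mul_add, Finset.sum_add_distrib, mul_ite, mul_zero,
    Finset.sum_ite_eq', Finset.mem_univ, if_true]
  ring

theorem lo_le_hi (A : V × V) : C.lo A ≤ C.hi A := by
  unfold lo hi
  split_ifs
  · exact C.hlr _
  · exact le_rfl

noncomputable def relu (z : ℤ) : ℝ := ((max z 0 : ℤ) : ℝ)

theorem relu_diff (z : ℤ) : relu (z + 1) + relu (z - 1) - 2 * relu z = if z = 0 then 1 else 0 := by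
  unfold relu
  split_ifs with h
  · subst h; norm_num
  · rcases lt_or_gt_of_ne h with h | h
    · rw [max_eq_right (by omega), max_eq_right (by omega), max_eq_right (by omega)]; simp
    · rw [max_eq_left (by omega), max_eq_left (by omega), max_eq_left (by omega)]; push_cast; ring

theorem relu_neg {z : ℤ} (h : z ≤ 0) : relu z = 0 := by
  unfold relu; rw [max_eq_right h]; simp

theorem relu_pos {z : ℤ} (h : 0 ≤ z) : relu z = z := by
  unfold relu; rw [max_eq_left h]

/-- bending moment -/
noncomputable def mm (j : ℤ) (A : V × V) (r : ℤ) : ℝ :=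
  relu (r - j) - (1 - C.tt j A) * relu (r - C.y A.1) - C.tt j A * relu (r - C.y A.2)

theorem item_le {j : ℤ} {A : V × V} (h : C.Item j A) : C.y A.1 ≤ j ∧ j ≤ C.y A.2 := by
  rcases h with ⟨h1, h2⟩ | ⟨h1, h2, h3⟩
  · rw [← h1]; omega
  · omega

theorem item_tt {j : ℤ} {A : V × V} (h : C.Item j A) :
    C.tt j A * ((C.y A.2 : ℝ) - C.y A.1) = j - C.y A.1 := by
  rcases h with ⟨h1, h2⟩ | ⟨h1, h2, h3⟩
  · rw [← h1, ← h2]; simp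
  · have : (C.y A.2 : ℝ) - C.y A.1 ≠ 0 := by
      have : (C.y A.1 : ℝ) < C.y A.2 := by exact_mod_cast h2.trans h3
      linarith
    unfold tt
    field_simp

theorem mm_low {j : ℤ} {A : V × V} (h : C.Item j A) {r : ℤ} (hr : r ≤ C.y A.1) :
    C.mm j A r = 0 := by
  have := C.item_le h
  unfold mm
  rw [relu_neg (by omega), relu_neg (by omega), relu_neg (by omega)]
  simp

theorem mm_high {j : ℤ} {A : V × V} (h : C.Item j A) {r : ℤ} (hr : C.y A.2 ≤ r) :
    C.mm j A r = 0 := by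
  have := C.item_le h
  have h2 := C.item_tt h
  unfold mm
  rw [relu_pos (by omega), relu_pos (by omega), relu_pos (by omega)]
  push_cast
  linarith

theorem mm_diff [Fintype V] (j : ℤ) (A : V × V) (r : ℤ) :
    C.mm j A (r + 1) + C.mm j A (r - 1) - 2 * C.mm j A r =
      (if r = j then 1 else 0) - ∑ w, if C.y w = r then C.coef j A w else 0 := by
  classical
  have e1 := relu_diff (r - j)
  have e2 := relu_diff (r - C.y A.1)
  have e3 := relu_diff (r - C.y A.2)
  have e4 : (∑ w, if C.y w = r then C.coef j A w else 0) =
      (1 - C.tt j A) * (if r - C.y A.1 = 0 then 1 else 0) +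
        C.tt j A * (if r - C.y A.2 = 0 then 1 else 0) := by
    have : ∀ w, (if C.y w = r then C.coef j A w else 0) =
        (if w = A.1 then (if C.y A.1 = r then 1 - C.tt j A else 0) else 0) +
        (if w = A.2 then (if C.y A.2 = r then C.tt j A else 0) else 0) := by
      intro w
      unfold coef
      by_cases h1 : w = A.1 <;> by_cases h2 : w = A.2
      · have h3 : A.1 = A.2 := h1 ▸ h2
        simp only [h1, ← h3, if_true]; split_ifs <;> ring
      · subst h1; simp [h2]
      · subst h2; simp [h1]
      · simp [h1, h2]
    simp only [this, Finset.sum_add_distrib, Finset.sum_ite_eq', Finset.mem_univ, if_true]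
    simp only [sub_eq_zero, eq_comm (a := r), mul_ite, mul_one, mul_zero]
  simp only [sub_eq_zero (a := r) (b := j)] at e1
  rw [e4, ← e1, ← e2, ← e3]
  unfold mm
  rw [show r + 1 - j = r - j + 1 by ring, show r - 1 - j = r - j - 1 by ring,
    show r + 1 - C.y A.1 = r - C.y A.1 + 1 by ring, show r - 1 - C.y A.1 = r - C.y A.1 - 1 by ring,
    show r + 1 - C.y A.2 = r - C.y A.2 + 1 by ring, show r - 1 - C.y A.2 = r - C.y A.2 - 1 by ring]
  ring

/-- in a gap column, an item lies left of it iff its endpoint in this row does. -/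
theorem coef_gap {j : ℤ} {A : V × V} (hA : C.Item j A) {k : ℤ} {w : V}
    (hg : C.Gap (C.y w) k) :
    (if C.hi A ≤ k then C.coef j A w else 0) = (if C.h w ≤ k then C.coef j A w else 0) := by
  by_cases hc : C.coef j A w = 0
  · simp [hc]
  have hw : w = A.1 ∨ w = A.2 := by
    by_contra h
    push Not at h
    exact hc (by simp [coef, h.1, h.2])
  have : C.hi A ≤ k ↔ C.h w ≤ k := by
    have hg' := hg w rfl
    unfold hi
    split_ifs with e
    · rcases hw with rfl | rfl
      · rfl
      · rw [e]
    · rcases hA with ⟨h1, _⟩ | ⟨h1, _⟩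
      · exact absurd h1 e
      · have hE := C.hE _ _ h1
        rcases hw with rfl | rfl <;> omega
  simp [this]

theorem exists_real [Fintype V] : ∃ X : V → ℝ, ∀ (w : V) (A B : V × V), C.Item (C.y w) A →
    C.Item (C.y w) B → C.hi A < C.lo B → C.posR X (C.y w) A < C.posR X (C.y w) B := by
  classical
  let ι := {i : V × (V × V) × (V × V) //
    C.Item (C.y i.1) i.2.1 ∧ C.Item (C.y i.1) i.2.2 ∧ C.hi i.2.1 < C.lo i.2.2}
  rcases gordan (ι := ι) (W := V) (fun i w =>
    C.coef (C.y i.1.1) i.1.2.2 w - C.coef (C.y i.1.1) i.1.2.1 w) with ⟨X, hX⟩ | ⟨c, hc0, hc1, hc⟩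
  · refine ⟨X, fun w A B hA hB hlt => ?_⟩
    have := hX ⟨(w, A, B), hA, hB, hlt⟩
    simp only [mul_sub, Finset.sum_sub_distrib, sum_coef] at this
    linarith
  exfalso
  let J : ι → ℤ := fun i => C.y i.1.1
  let fA : ι → V × V := fun i => i.1.2.1
  let fB : ι → V × V := fun i => i.1.2.2
  have iA : ∀ i, C.Item (J i) (fA i) := fun i => i.2.1
  have iB : ∀ i, C.Item (J i) (fB i) := fun i => i.2.2.1
  have iAB : ∀ i, C.hi (fA i) < C.lo (fB i) := fun i => i.2.2.2
  have hc' : ∀ w, ∑ i, c i * (C.coef (J i) (fA i) w - C.coef (J i) (fB i) w) = 0 := by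
    intro w
    rw [← neg_eq_zero, ← hc w, ← Finset.sum_neg_distrib]
    refine Finset.sum_congr rfl fun i _ => ?_
    simp only [J, fA, fB]
    ring
  let Φ : ℤ → ℤ → ℝ := fun r k => ∑ i, c i *
    ((if C.hi (fA i) ≤ k then C.mm (J i) (fA i) r else 0) -
      (if C.hi (fB i) ≤ k then C.mm (J i) (fB i) r else 0))
  have hterm : ∀ j A, C.Item j A → ∀ r k,
      ¬ (∃ u v, C.E u v ∧ C.p u v = k ∧ C.y u < r ∧ r < C.y v) →
      (if C.hi A ≤ k - 1 then C.mm j A r else 0) = (if C.hi A ≤ k then C.mm j A r else 0) := by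
    intro j A hA r k hno
    by_cases hk : C.hi A = k
    · have : C.mm j A r = 0 := by
        rcases hA with ⟨h1, h2⟩ | ⟨h1, h2, h3⟩
        · rcases le_total r (C.y A.1) with h | h
          · exact C.mm_low (Or.inl ⟨h1, h2⟩) h
          · exact C.mm_high (Or.inl ⟨h1, h2⟩) (h1 ▸ h)
        · have hne : A.1 ≠ A.2 := by
            intro e; rw [e] at h2; omega
          simp only [hi, hne, if_false] at hk
          by_cases h4 : C.y A.1 < r
          · refine C.mm_high (Or.inr ⟨h1, h2, h3⟩) ?_
            by_contra h5
            exact hno ⟨_, _, h1, hk, h4, by omega⟩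
          · exact C.mm_low (Or.inr ⟨h1, h2, h3⟩) (by omega)
      simp [this]
    · have : C.hi A ≤ k - 1 ↔ C.hi A ≤ k := by omega
      simp [this]
  have hstep : ∀ r k, Φ r (k - 1) = Φ r k ∨
      ∃ u v, C.E u v ∧ C.p u v = k ∧ C.y u < r ∧ r < C.y v := by
    intro r k
    by_cases h : ∃ u v, C.E u v ∧ C.p u v = k ∧ C.y u < r ∧ r < C.y v
    · exact Or.inr h
    · left
      refine Finset.sum_congr rfl fun i _ => ?_
      rw [hterm _ _ (iA i) r k h, hterm _ _ (iB i) r k h]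
  have hD : ∀ r k, C.Gap r k → Φ (r + 1) k + Φ (r - 1) k - 2 * Φ r k =
      ∑ i, c i * (if r = J i then
        ((if C.hi (fA i) ≤ k then (1 : ℝ) else 0) - (if C.hi (fB i) ≤ k then 1 else 0)) else 0) := by
    intro r k hg
    have hd : ∀ j A, C.Item j A → 
        (if C.hi A ≤ k then C.mm j A (r + 1) else 0) + (if C.hi A ≤ k then C.mm j A (r - 1) else 0)
          - 2 * (if C.hi A ≤ k then C.mm j A r else 0) =
        (if r = j then (if C.hi A ≤ k then (1 : ℝ) else 0) else 0) -
          ∑ w, if C.y w = r then (if C.h w ≤ k then C.coef j A w else 0) else 0 := by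
      intro j A hA
      have e := C.mm_diff j A r
      have e2 : (∑ w, if C.y w = r then (if C.h w ≤ k then C.coef j A w else 0) else 0) =
          if C.hi A ≤ k then (∑ w, if C.y w = r then C.coef j A w else 0) else 0 := by
        have : ∀ w, (if C.y w = r then (if C.h w ≤ k then C.coef j A w else 0) else 0) =
            if C.hi A ≤ k then (if C.y w = r then C.coef j A w else 0) else 0 := by
          intro w
          by_cases hw : C.y w = r
          · simp only [hw, if_true]
            exact (C.coef_gap hA (hw ▸ hg)).symm
          · simp [hw]
        simp only [this]
        by_cases h : C.hi A ≤ k <;> simp [h]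
      rw [e2]
      by_cases h : C.hi A ≤ k
      · simp only [h, if_true]; exact e
      · simp [h]
    have hz : ∑ i, c i * ((∑ w, if C.y w = r then (if C.h w ≤ k then C.coef (J i) (fA i) w else 0) else 0)
        - (∑ w, if C.y w = r then (if C.h w ≤ k then C.coef (J i) (fB i) w else 0) else 0)) = 0 := by
      have : ∀ i, c i * ((∑ w, if C.y w = r then (if C.h w ≤ k then C.coef (J i) (fA i) w else 0) else 0)
        - (∑ w, if C.y w = r then (if C.h w ≤ k then C.coef (J i) (fB i) w else 0) else 0)) =
          ∑ w, if C.y w = r then (if C.h w ≤ k then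
            c i * (C.coef (J i) (fA i) w - C.coef (J i) (fB i) w) else 0) else 0 := by
        intro i
        rw [← Finset.sum_sub_distrib, Finset.mul_sum]
        refine Finset.sum_congr rfl fun w _ => ?_
        split_ifs <;> simp
      simp only [this]
      rw [Finset.sum_comm]
      refine Finset.sum_eq_zero fun w _ => ?_
      by_cases h1 : C.y w = r <;> by_cases h2 : C.h w ≤ k <;> simp [h1, h2, hc' w]
    rw [← neg_eq_zero] at hz
    refine eq_of_sub_eq_zero (Eq.trans ?_ hz)
    simp only [Φ]
    rw [Finset.mul_sum, ← Finset.sum_add_distrib, ← Finset.sum_sub_distrib,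
      ← Finset.sum_sub_distrib, ← Finset.sum_neg_distrib]
    refine Finset.sum_congr rfl fun i _ => ?_
    have a1 := hd _ _ (iA i)
    have a2 := hd _ _ (iB i)
    have a3 : (if r = J i then
        ((if C.hi (fA i) ≤ k then (1 : ℝ) else 0) - (if C.hi (fB i) ≤ k then 1 else 0)) else 0)
        = (if r = J i then (if C.hi (fA i) ≤ k then (1 : ℝ) else 0) else 0) -
          (if r = J i then (if C.hi (fB i) ≤ k then (1 : ℝ) else 0) else 0) := by
      by_cases h : r = J i <;> simp [h]
    rw [a3]
    linear_combination c i * (a1 - a2)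
  have hterm0 : ∀ r k i, 0 ≤ c i * (if r = J i then
        ((if C.hi (fA i) ≤ k then (1 : ℝ) else 0) - (if C.hi (fB i) ≤ k then 1 else 0)) else 0) := by
    intro r k i
    refine mul_nonneg (hc0 i) ?_
    have h1 := iAB i
    have h2 := C.lo_le_hi (fB i)
    split_ifs <;> first | omega | norm_num
  have hconv : ∀ r k, C.Gap r k → 0 ≤ Φ (r + 1) k + Φ (r - 1) k - 2 * Φ r k := by
    intro r k hg
    rw [hD r k hg]
    exact Finset.sum_nonneg fun i _ => hterm0 r k i
  -- bounds
  obtain ⟨R, hR⟩ : ∃ R : ℤ, ∀ w, -R ≤ C.y w ∧ C.y w ≤ R := by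
    refine ⟨∑ w, |C.y w|, fun w => abs_le.1 ?_⟩
    exact Finset.single_le_sum (f := fun w => |C.y w|) (fun _ _ => abs_nonneg _) (Finset.mem_univ w)
  obtain ⟨K, hK⟩ : ∃ K : ℤ, ∀ A : V × V, -K < C.hi A ∧ C.hi A < K := by
    refine ⟨∑ A, |C.hi A| + 1, fun A => abs_lt.1 ?_⟩
    have := Finset.single_le_sum (f := fun A => |C.hi A|) (fun _ _ => abs_nonneg _)
      (Finset.mem_univ A)
    omega
  have hR1 : ∀ r k, r ≤ -R → Φ r k = 0 := by
    intro r k hr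
    refine Finset.sum_eq_zero fun i _ => ?_
    rw [C.mm_low (iA i) (by have := hR (fA i).1; omega),
      C.mm_low (iB i) (by have := hR (fB i).1; omega)]
    simp
  have hR2 : ∀ r k, R ≤ r → Φ r k = 0 := by
    intro r k hr
    refine Finset.sum_eq_zero fun i _ => ?_
    rw [C.mm_high (iA i) (by have := hR (fA i).2; omega),
      C.mm_high (iB i) (by have := hR (fB i).2; omega)]
    simp
  have hK1 : ∀ r k, k ≤ -K → Φ r k = 0 := by
    intro r k hk
    refine Finset.sum_eq_zero fun i _ => ?_
    rw [if_neg (by have := hK (fA i); omega), if_neg (by have := hK (fB i); omega)]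
    simp
  have hK2 : ∀ r k, K ≤ k → Φ r k = Φ r K := by
    intro r k hk
    refine Finset.sum_congr rfl fun i _ => ?_
    have a := hK (fA i)
    have b := hK (fB i)
    rw [if_pos (by omega), if_pos (by omega), if_pos (by omega), if_pos (by omega)]
  have hKh : ∀ w, C.h w ≤ K := by
    intro w
    have := hK (w, w)
    simp only [hi, if_true] at this
    omega
  have hnp := C.phi_nonpos Φ hstep hconv R K hR1 hR2 hK1 hK2 hKh
  have hzero := C.phi_zero Φ hstep hconv hnp (-K) hK1
  -- a positive multiplier
  obtain ⟨i, hi⟩ : ∃ i, 0 < c i := by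
    by_contra h
    push Not at h
    have : ∑ i, c i ≤ 0 := Finset.sum_nonpos fun i _ => h i
    linarith
  have hg : C.Gap (J i) (C.hi (fA i)) := by
    rcases iA i with ⟨h1, h2⟩ | ⟨h1, h2, h3⟩
    · have : C.hi (fA i) = C.h (fA i).1 := by simp [VCfg.hi, h1]
      rw [this, ← h2]
      exact C.gap_right _
    · have hne : (fA i).1 ≠ (fA i).2 := by
        intro e; rw [e] at h2; omega
      have : C.hi (fA i) = C.p (fA i).1 (fA i).2 := by simp [VCfg.hi, hne]
      rw [this]
      exact C.gap_edge h1 h2 h3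
  have h1 := hD _ _ hg
  rw [hzero, hzero, hzero] at h1
  have h2 := Finset.single_le_sum (fun i' _ => hterm0 (J i) (C.hi (fA i)) i') (Finset.mem_univ i)
  rw [← h1] at h2
  have h3 := iAB i
  have h4 := C.lo_le_hi (fB i)
  simp only [if_true, le_refl] at h2
  rw [if_neg (by omega)] at h2
  linarith
theorem tt_mem {j : ℤ} {A : V × V} (h : C.Item j A) : 0 ≤ C.tt j A ∧ C.tt j A ≤ 1 := by
  have h1 := C.item_le h
  have h2 : (C.y A.1 : ℝ) ≤ j := by exact_mod_cast h1.1
  have h3 : (j : ℝ) ≤ C.y A.2 := by exact_mod_cast h1.2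
  unfold tt
  exact ⟨div_nonneg (by linarith) (by linarith), div_le_one_of_le₀ (by linarith) (by linarith)⟩

theorem exists_int [Fintype V] : ∃ X : V → ℤ, ∀ (w : V) (A B : V × V), C.Item (C.y w) A →
    C.Item (C.y w) B → C.hi A < C.lo B →
    C.posR (fun v => (X v : ℝ)) (C.y w) A < C.posR (fun v => (X v : ℝ)) (C.y w) B := by
  classical
  obtain ⟨X, hX⟩ := C.exists_real
  have hev : ∀ i : V × (V × V) × (V × V), ∀ᶠ N : ℕ in Filter.atTop,
      C.Item (C.y i.1) i.2.1 → C.Item (C.y i.1) i.2.2 → C.hi i.2.1 < C.lo i.2.2 →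
      2 < (N : ℝ) * (C.posR X (C.y i.1) i.2.2 - C.posR X (C.y i.1) i.2.1) := by
    intro i
    by_cases h : C.Item (C.y i.1) i.2.1 ∧ C.Item (C.y i.1) i.2.2 ∧ C.hi i.2.1 < C.lo i.2.2
    · have hpos := sub_pos.2 (hX i.1 i.2.1 i.2.2 h.1 h.2.1 h.2.2)
      have := ((tendsto_natCast_atTop_atTop (R := ℝ)).atTop_mul_const hpos).eventually_gt_atTop 2
      filter_upwards [this] with N hN _ _ _ using hN
    · filter_upwards with N h1 h2 h3
      exact absurd ⟨h1, h2, h3⟩ h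
  obtain ⟨N, hN⟩ := (Filter.eventually_all.2 hev).exists
  refine ⟨fun v => ⌊(N : ℝ) * X v⌋, fun w A B hA hB hlt => ?_⟩
  have h := hN (w, A, B) hA hB hlt
  have hfl : ∀ A, C.Item (C.y w) A →
      N * C.posR X (C.y w) A - 1 ≤ C.posR (fun v => ((⌊(N : ℝ) * X v⌋ : ℤ) : ℝ)) (C.y w) A ∧
      C.posR (fun v => ((⌊(N : ℝ) * X v⌋ : ℤ) : ℝ)) (C.y w) A ≤ N * C.posR X (C.y w) A := by
    intro A hA
    obtain ⟨t0, t1⟩ := C.tt_mem hA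
    unfold posR
    have a1 := Int.floor_le ((N : ℝ) * X A.1)
    have a2 := Int.sub_one_lt_floor ((N : ℝ) * X A.1)
    have b1 := Int.floor_le ((N : ℝ) * X A.2)
    have b2 := Int.sub_one_lt_floor ((N : ℝ) * X A.2)
    constructor <;> nlinarith
  have h1 := (hfl A hA).2
  have h2 := (hfl B hB).1
  simp only at h
  linarith

theorem item_vertex (w : V) : C.Item (C.y w) (w, w) := Or.inl ⟨rfl, rfl⟩

theorem posR_vertex (X : V → ℝ) (j : ℝ) (w : V) : C.posR X j (w, w) = X w := by
  simp [posR]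

theorem posR_low (X : V → ℝ) (u v : V) : C.posR X (C.y u) (u, v) = X u := by
  simp [posR, tt]

theorem posR_high (X : V → ℝ) {u v : V} (h : C.y u < C.y v) :
    C.posR X (C.y v) (u, v) = X v := by
  have : (C.y v : ℝ) - C.y u ≠ 0 := by
    have : (C.y u : ℝ) < C.y v := by exact_mod_cast h
    linarith
  simp [posR, tt, div_self this]

theorem item_edge_ne {u v : V} (he : C.E u v) : u ≠ v := by
  rintro rfl
  have := (C.hE _ _ he).1
  omega

theorem comp {j : ℤ} {A B : V × V} (hA : C.Item j A) (hB : C.Item j B) (hne : A ≠ B) :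
    C.hi A < C.lo B ∨ C.hi B < C.lo A := by
  obtain ⟨a, b⟩ := A
  obtain ⟨c, d⟩ := B
  rcases hA with ⟨h1, h2⟩ | ⟨h1, h2, h3⟩ <;> rcases hB with ⟨k1, k2⟩ | ⟨k1, k2, k3⟩
  · simp only at h1 h2 k1 k2
    subst h1 k1
    simp only [hi, lo, if_true]
    exact C.hdisj a c (by rintro rfl; exact hne rfl) (by omega)
  · simp only at h1 h2 k1 k2 k3
    subst h1
    simp only [hi, lo, if_true, if_neg (C.item_edge_ne k1)]
    rcases C.hcross c d a k1 (by omega) (by omega) with h | h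
    · right; omega
    · left; omega
  · simp only at h1 h2 h3 k1 k2
    subst k1
    simp only [hi, lo, if_true, if_neg (C.item_edge_ne h1)]
    exact C.hcross a b c h1 (by omega) (by omega)
  · simp only at h1 h2 h3 k1 k2 k3
    simp only [hi, lo, if_neg (C.item_edge_ne h1), if_neg (C.item_edge_ne k1)]
    rcases lt_trichotomy (C.p a b) (C.p c d) with h | h | h
    · exact Or.inl h
    · obtain ⟨rfl, rfl⟩ := C.hee a b c d h1 k1 h (by omega) (by omega)
      exact absurd rfl hne
    · exact Or.inr h

theorem edge_item (X : V → ℝ) {u v : V} (he : C.E u v) {j : ℤ} (h1 : C.y u ≤ j)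
    (h2 : j ≤ C.y v) : ∃ A, C.Item j A ∧ C.lo A ≤ C.p u v ∧ C.p u v ≤ C.hi A ∧
      C.posR X j A = C.posR X j (u, v) ∧
      ((A = (u, v) ∧ C.y u < j ∧ j < C.y v) ∨ ∃ w, A = (w, w) ∧ (w = u ∨ w = v) ∧ C.y w = j) := by
  have hE := C.hE u v he
  rcases lt_or_eq_of_le h1 with h1 | rfl
  · rcases lt_or_eq_of_le h2 with h2 | rfl
    · refine ⟨(u, v), Or.inr ⟨he, h1, h2⟩, ?_, ?_, rfl, Or.inl ⟨rfl, h1, h2⟩⟩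
      · simp [lo, C.item_edge_ne he]
      · simp [hi, C.item_edge_ne he]
    · refine ⟨(v, v), C.item_vertex v, ?_, ?_, ?_, Or.inr ⟨v, rfl, Or.inr rfl, rfl⟩⟩
      · simpa [lo] using hE.2.2.2.1
      · simpa [hi] using hE.2.2.2.2
      · rw [C.posR_vertex, C.posR_high X hE.1]
  · refine ⟨(u, u), C.item_vertex u, ?_, ?_, ?_, Or.inr ⟨u, rfl, Or.inl rfl, rfl⟩⟩
    · simpa [lo] using hE.2.1
    · simpa [hi] using hE.2.2.1
    · rw [C.posR_vertex, C.posR_low X]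

/-- The data of a horizontal edge. -/
def Hor (c d : V) : Prop := C.y c = C.y d ∧ C.h c < C.l d ∧
  (∀ w, C.y w = C.y c → w ≠ c → w ≠ d → C.h w < C.l c ∨ C.h d < C.l w) ∧
  (∀ a b, C.E a b → C.y a < C.y c → C.y c < C.y b → C.p a b < C.l c ∨ C.h d < C.p a b)

def OnC (X : V → ℝ) (u v : V) (z : ℝ × ℝ) : Prop :=
  (C.E u v ∧ (C.y u : ℝ) ≤ z.2 ∧ z.2 ≤ C.y v ∧ z.1 = C.posR X z.2 (u, v)) ∨
  (C.Hor u v ∧ z.2 = C.y u ∧ X u ≤ z.1 ∧ z.1 ≤ X v)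

section draw

variable (X : V → ℝ) (hX : ∀ (w : V) (A B : V × V), C.Item (C.y w) A →
    C.Item (C.y w) B → C.hi A < C.lo B → C.posR X (C.y w) A < C.posR X (C.y w) B)

include hX

theorem X_lt {v w : V} (hy : C.y v = C.y w) (h : C.h v < C.l w) : X v < X w := by
  have := hX w (v, v) (w, w) (hy ▸ C.item_vertex v) (C.item_vertex w) (by simpa [hi, lo] using h)
  simpa [posR_vertex] using this

theorem posR_ne {w : V} {A B : V × V} (hA : C.Item (C.y w) A) (hB : C.Item (C.y w) B)
    (hne : A ≠ B) : C.posR X (C.y w) A ≠ C.posR X (C.y w) B := by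
  rcases C.comp hA hB hne with h | h
  · exact (hX w A B hA hB h).ne
  · exact (hX w B A hB hA h).ne'

theorem onC_vertex {u v w : V} (h : C.OnC X u v (X w, (C.y w : ℝ))) : w = u ∨ w = v := by
  rcases h with ⟨he, h1, h2, h3⟩ | ⟨⟨hy, hl, hw, -⟩, h2, h3, h4⟩
  · simp only at h1 h2 h3
    obtain ⟨A, hA, -, -, hpos, hc⟩ := C.edge_item X he (j := C.y w) (by exact_mod_cast h1)
      (by exact_mod_cast h2)
    by_cases hne : A = (w, w)
    · rcases hc with ⟨rfl, -, -⟩ | ⟨w', rfl, hw', -⟩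
      · simp only [Prod.mk.injEq] at hne
        exact Or.inl hne.1.symm
      · simp only [Prod.mk.injEq] at hne
        rw [← hne.1]; exact hw'
    · exfalso
      apply C.posR_ne X hX hA (C.item_vertex w) hne
      rw [hpos, ← h3, posR_vertex]
  · simp only at h2 h3 h4
    have h2' : C.y w = C.y u := by exact_mod_cast h2
    by_contra hcon
    push Not at hcon
    rcases hw w h2' hcon.1 hcon.2 with h | h
    · have := C.X_lt X hX h2' h; linarith
    · have := C.X_lt X hX (hy.symm.trans h2'.symm) h; linarith

theorem row_cmp {u v u' v' w : V} (he : C.E u v) (he' : C.E u' v') (hne : (u, v) ≠ (u', v'))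
    (h1 : C.y u ≤ C.y w) (h2 : C.y w ≤ C.y v) (h3 : C.y u' ≤ C.y w) (h4 : C.y w ≤ C.y v') :
    (∃ x, (x = u ∨ x = v) ∧ (x = u' ∨ x = v') ∧ C.y x = C.y w ∧
      C.posR X (C.y w) (u, v) = X x ∧ C.posR X (C.y w) (u', v') = X x) ∨
    (C.posR X (C.y w) (u, v) ≠ C.posR X (C.y w) (u', v') ∧
      (C.p u v < C.p u' v' → C.posR X (C.y w) (u, v) < C.posR X (C.y w) (u', v'))) := by
  obtain ⟨A, hA, la, ra, pa, ca⟩ := C.edge_item X he h1 h2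
  obtain ⟨B, hB, lb, rb, pb, cb⟩ := C.edge_item X he' h3 h4
  by_cases hAB : A = B
  · left
    subst hAB
    rcases ca with ⟨rfl, ca1, ca2⟩ | ⟨x, rfl, hx, hy⟩
    · rcases cb with ⟨cb, -⟩ | ⟨x, cb, -⟩
      · exact absurd cb hne
      · simp only [Prod.mk.injEq] at cb
        exact absurd (cb.1.trans cb.2.symm) (C.item_edge_ne he)
    · rw [posR_vertex] at pa pb
      refine ⟨x, hx, ?_, hy, pa.symm, pb.symm⟩
      rcases cb with ⟨cb, -⟩ | ⟨x', cb, hx', -⟩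
      · simp only [Prod.mk.injEq] at cb
        exact Or.inl cb.1
      · simp only [Prod.mk.injEq] at cb
        rw [cb.1]; exact hx'
  · right
    rw [← pa, ← pb]
    refine ⟨C.posR_ne X hX hA hB hAB, fun hp => ?_⟩
    rcases C.comp hA hB hAB with h | h
    · exact hX w A B hA hB h
    · omega

theorem cross_VV {u v u' v' : V} (he : C.E u v) (he' : C.E u' v') (hne : (u, v) ≠ (u', v'))
    (hp : C.p u v ≤ C.p u' v') {Y : ℝ}
    (h1 : (C.y u : ℝ) ≤ Y) (h2 : Y ≤ C.y v) (h3 : (C.y u' : ℝ) ≤ Y) (h4 : Y ≤ C.y v')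
    (heq : C.posR X Y (u, v) = C.posR X Y (u', v')) :
    ∃ x, (x = u ∨ x = v) ∧ (x = u' ∨ x = v') ∧ (C.y x : ℝ) = Y ∧ C.posR X Y (u, v) = X x := by
  -- rows of vertices
  have rowcase : ∀ w, (C.y w : ℝ) = Y →
      ∃ x, (x = u ∨ x = v) ∧ (x = u' ∨ x = v') ∧ (C.y x : ℝ) = Y ∧
        C.posR X Y (u, v) = X x := by
    intro w hw
    subst hw
    rcases C.row_cmp X hX (w := w) he he' hne (by exact_mod_cast h1) (by exact_mod_cast h2)
      (by exact_mod_cast h3) (by exact_mod_cast h4) with ⟨x, hx, hx', hy, e, -⟩ | ⟨h, -⟩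
    · exact ⟨x, hx, hx', by rw [hy], e⟩
    · exact absurd heq h
  by_cases hrow : ∃ w, (C.y w : ℝ) = Y
  · exact rowcase _ hrow.choose_spec
  push Not at hrow
  have h1' := lt_of_le_of_ne h1 (hrow u)
  have h2' := lt_of_le_of_ne h2 (hrow v).symm
  have h3' := lt_of_le_of_ne h3 (hrow u')
  have h4' := lt_of_le_of_ne h4 (hrow v').symm
  have hplt : C.p u v < C.p u' v' := by
    rcases lt_or_eq_of_le hp with h | h
    · exact h
    · obtain ⟨rfl, rfl⟩ := C.hee u v u' v' he he' h (by exact_mod_cast h1'.trans h4')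
        (by exact_mod_cast h3'.trans h2')
      exact absurd rfl hne
  -- lower and upper row
  obtain ⟨a, ha, ha1, ha2, haY⟩ : ∃ a, (a = u ∨ a = u') ∧ C.y u ≤ C.y a ∧ C.y u' ≤ C.y a ∧
      (C.y a : ℝ) < Y := by
    rcases le_total (C.y u) (C.y u') with h | h
    · exact ⟨u', Or.inr rfl, h, le_rfl, h3'⟩
    · exact ⟨u, Or.inl rfl, le_rfl, h, h1'⟩
  obtain ⟨b, hb, hb1, hb2, hbY⟩ : ∃ b, (b = v ∨ b = v') ∧ C.y b ≤ C.y v ∧ C.y b ≤ C.y v' ∧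
      Y < (C.y b : ℝ) := by
    rcases le_total (C.y v) (C.y v') with h | h
    · exact ⟨v, Or.inl rfl, le_rfl, h, h2'⟩
    · exact ⟨v', Or.inr rfl, h, le_rfl, h4'⟩
  have hab : C.y a < C.y b := by exact_mod_cast haY.trans hbY
  have ca := C.row_cmp X hX (w := a) he he' hne ha1 (by omega) ha2 (by omega)
  have cb := C.row_cmp X hX (w := b) he he' hne (by omega) hb1 (by omega) hb2
  -- affine interpolation
  have haff : ∀ A : V × V, C.posR X Y A * ((C.y b : ℝ) - C.y a) =
      C.posR X (C.y a) A * (C.y b - Y) + C.posR X (C.y b) A * (Y - C.y a) := by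
    intro A
    unfold posR tt
    by_cases hz : (C.y A.2 : ℝ) - C.y A.1 = 0
    · rw [hz]; simp; ring
    · field_simp; ring
  have f1 := haff (u, v)
  have f2 := haff (u', v')
  rw [heq] at f1
  have hle : ∀ {P Q : Prop} {r s : ℝ}, (P ∨ (r ≠ s ∧ (Q → r < s))) → Q → P ∨ r < s :=
    fun h q => h.imp id (fun h => h.2 q)
  have ca' := hle ca hplt
  have cb' := hle cb hplt
  exfalso
  have hb' : 0 < (C.y b : ℝ) - Y := by linarith
  have ha' : 0 < Y - (C.y a : ℝ) := by linarith
  rcases ca' with ⟨x, hx, hx', hxy, e1, e2⟩ | hlt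
  · rcases cb' with ⟨z, hz, hz', hzy, -, -⟩ | hlt'
    · have hu : x = u := by
        rcases hx with h | rfl
        · exact h
        · omega
      have hu' : x = u' := by
        rcases hx' with h | rfl
        · exact h
        · omega
      have hv : z = v := by
        rcases hz with rfl | h
        · omega
        · exact h
      have hv' : z = v' := by
        rcases hz' with rfl | h
        · omega
        · exact h
      exact hne (by rw [← hu, ← hv, hu', hv'])
    · rw [e1] at f1; rw [e2] at f2
      nlinarith [mul_pos ha' (sub_pos.2 hlt')]
  · have hle2 : C.posR X (C.y b) (u, v) ≤ C.posR X (C.y b) (u', v') := by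
      rcases cb' with ⟨z, -, -, -, e1, e2⟩ | h
      · rw [e1, e2]
      · exact h.le
    nlinarith [mul_pos hb' (sub_pos.2 hlt), mul_nonneg ha'.le (sub_nonneg.2 hle2)]

theorem cross_VH {u v c d : V} (he : C.E u v) (hh : C.Hor c d) {z : ℝ × ℝ}
    (h1 : (C.y u : ℝ) ≤ z.2) (h2 : z.2 ≤ C.y v) (h3 : z.1 = C.posR X z.2 (u, v))
    (k1 : z.2 = C.y c) (k2 : X c ≤ z.1) (k3 : z.1 ≤ X d) :
    ∃ x, (x = u ∨ x = v) ∧ (x = c ∨ x = d) ∧ z = (X x, (C.y x : ℝ)) := by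
  obtain ⟨hy, hl, hw, hE⟩ := hh
  rw [k1] at h1 h2 h3
  obtain ⟨A, hA, -, -, pa, ca⟩ := C.edge_item X he (j := C.y c) (by exact_mod_cast h1)
    (by exact_mod_cast h2)
  rcases ca with ⟨rfl, c1, c2⟩ | ⟨x, rfl, hx, hxy⟩
  · exfalso
    have hd : C.Item (C.y c) (d, d) := hy ▸ C.item_vertex d
    rcases hE u v he c1 c2 with h | h
    · have := hX c (u, v) (c, c) hA (C.item_vertex c)
        (by simpa [hi, lo, C.item_edge_ne he] using h)
      rw [posR_vertex] at this; linarith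
    · have := hX c (d, d) (u, v) hd hA (by simpa [hi, lo, C.item_edge_ne he] using h)
      rw [posR_vertex] at this; linarith
  · rw [posR_vertex] at pa
    refine ⟨x, hx, ?_, ?_⟩
    · by_contra hcon
      push Not at hcon
      rcases hw x hxy hcon.1 hcon.2 with h | h
      · have := C.X_lt X hX hxy h; linarith
      · have := C.X_lt X hX (hy.symm.trans hxy.symm) h; linarith
    · ext
      · simp only; rw [h3, ← pa]
      · simp only; rw [k1, hxy]

theorem cross_HH {a b c d : V} (hab : C.Hor a b) (hcd : C.Hor c d) (hne : (a, b) ≠ (c, d))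
    {z : ℝ × ℝ} (h1 : z.2 = C.y a) (h2 : X a ≤ z.1) (h3 : z.1 ≤ X b)
    (k1 : z.2 = C.y c) (k2 : X c ≤ z.1) (k3 : z.1 ≤ X d) :
    ∃ x, (x = a ∨ x = b) ∧ (x = c ∨ x = d) ∧ z = (X x, (C.y x : ℝ)) := by
  obtain ⟨hy, hl, hw, -⟩ := hab
  obtain ⟨hy', hl', hw', -⟩ := hcd
  have hac : C.y a = C.y c := by
    have : (C.y a : ℝ) = C.y c := by linarith
    exact_mod_cast this
  have out : ∀ w, C.y w = C.y a → w ≠ a → w ≠ b → X w < X a ∨ X b < X w := by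
    intro w e n1 n2
    rcases hw w e n1 n2 with h | h
    · exact Or.inl (C.X_lt X hX e h)
    · exact Or.inr (C.X_lt X hX (hy.symm.trans e.symm) h)
  have out' : ∀ w, C.y w = C.y c → w ≠ c → w ≠ d → X w < X c ∨ X d < X w := by
    intro w e n1 n2
    rcases hw' w e n1 n2 with h | h
    · exact Or.inl (C.X_lt X hX e h)
    · exact Or.inr (C.X_lt X hX (hy'.symm.trans e.symm) h)
  have lt1 := C.X_lt X hX hy hl
  have lt2 := C.X_lt X hX hy' hl'
  have oa := out' a hac
  have ob := out' b (by omega)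
  have oc := out c hac.symm
  have od := out d (by omega)
  by_cases e1 : a = c
  · subst e1
    by_cases e2 : b = d
    · subst e2; exact absurd rfl hne
    · exfalso
      rcases ob (by rintro rfl; linarith) e2 with h | h <;>
      rcases od (by rintro rfl; linarith) (Ne.symm e2) with h' | h' <;> linarith
  by_cases e2 : b = d
  · subst e2
    exfalso
    rcases oa e1 (by rintro rfl; linarith) with h | h <;>
    rcases oc (Ne.symm e1) (by rintro rfl; linarith) with h' | h' <;> linarith
  by_cases e3 : a = d
  · subst e3
    refine ⟨a, Or.inl rfl, Or.inr rfl, ?_⟩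
    ext
    · simp only; linarith
    · simp only; linarith
  by_cases e4 : b = c
  · subst e4
    refine ⟨b, Or.inr rfl, Or.inl rfl, ?_⟩
    ext
    · simp only; linarith
    · simp only; linarith
  exfalso
  rcases oa e1 e3 with h | h <;> rcases ob e4 e2 with h' | h' <;>
  rcases oc (Ne.symm e1) (Ne.symm e4) with h'' | h'' <;> 
  rcases od (Ne.symm e3) (Ne.symm e2) with h''' | h''' <;> linarith

theorem onC_cross {u v u' v' : V} {z : ℝ × ℝ} (h : C.OnC X u v z) (h' : C.OnC X u' v' z)
    (hne : (u, v) ≠ (u', v')) :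
    ∃ x, (x = u ∨ x = v) ∧ (x = u' ∨ x = v') ∧ z = (X x, (C.y x : ℝ)) := by
  rcases h with ⟨he, h1, h2, h3⟩ | ⟨hh, h1, h2, h3⟩ <;>
  rcases h' with ⟨he', k1, k2, k3⟩ | ⟨hh', k1, k2, k3⟩
  · rcases le_total (C.p u v) (C.p u' v') with hp | hp
    · obtain ⟨x, a, b, c, d⟩ := C.cross_VV X hX he he' hne hp h1 h2 k1 k2 (h3.symm.trans k3)
      exact ⟨x, a, b, Prod.ext (h3.trans d) c.symm⟩
    · obtain ⟨x, a, b, c, d⟩ := C.cross_VV X hX he' he hne.symm hp k1 k2 h1 h2 (k3.symm.trans h3)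
      exact ⟨x, b, a, Prod.ext (k3.trans d) c.symm⟩
  · exact C.cross_VH X hX he hh' h1 h2 h3 k1 k2 k3
  · obtain ⟨x, a, b, c⟩ := C.cross_VH X hX he' hh k1 k2 k3 h1 h2 h3
    exact ⟨x, b, a, c⟩
  · exact C.cross_HH X hX hh hh' hne h1 h2 h3 k1 k2 k3

end draw

theorem onC_of_mem (X : V → ℝ) {u v : V} (h : C.E u v ∨ (C.Hor u v ∧ X u ≤ X v)) {z : ℝ × ℝ}
    (hz : z ∈ segment ℝ (X u, (C.y u : ℝ)) (X v, (C.y v : ℝ))) : C.OnC X u v z := by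
  obtain ⟨a, b, ha, hb, hab, rfl⟩ := hz
  obtain rfl : a = 1 - b := by linarith
  rcases h with he | ⟨hh, hle⟩
  · left
    have hy : (C.y u : ℝ) < C.y v := by exact_mod_cast (C.hE u v he).1
    refine ⟨he, ?_, ?_, ?_⟩
    · simp; nlinarith
    · simp; nlinarith
    · have : (C.y v : ℝ) - C.y u ≠ 0 := by linarith
      simp [posR, tt]
      field_simp
      ring
  · right
    have hy : (C.y u : ℝ) = C.y v := by exact_mod_cast hh.1
    refine ⟨hh, ?_, ?_, ?_⟩
    · simp [← hy]; ring
    · simp; nlinarith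
    · simp; nlinarith
end VCfg

theorem chainSet_pair (P Q : Pt) : chainSet [P, Q] = segment ℝ P Q := by
  simp [chainSet, chainSegs]

theorem isSimpleChain_pair {P Q : Pt} (h : P ≠ Q) : IsSimpleChain [P, Q] := by
  refine ⟨by simp, by simpa using h, ?_⟩
  intro i j hij hi hj
  simp [chainSegs] at hi hj
  omega

theorem genuineBends_pair (P Q : Pt) : GenuineBends [P, Q] := by
  intro i h
  simp at h

theorem mem_vseg (x a b t : ℝ) (h1 : a ≤ t) (h2 : t ≤ b) :
    ((x, t) : Pt) ∈ segment ℝ ((x, a) : Pt) (x, b) := by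
  have : t ∈ segment ℝ a b := by rw [segment_eq_Icc (h1.trans h2)]; exact ⟨h1, h2⟩
  obtain ⟨c, d, hc, hd, hcd, rfl⟩ := this
  refine ⟨c, d, hc, hd, hcd, ?_⟩
  ext
  · simp [← add_mul, hcd]
  · simp

theorem mem_hseg (y a b t : ℝ) (h1 : a ≤ t) (h2 : t ≤ b) :
    ((t, y) : Pt) ∈ segment ℝ ((a, y) : Pt) (b, y) := by
  have : t ∈ segment ℝ a b := by rw [segment_eq_Icc (h1.trans h2)]; exact ⟨h1, h2⟩
  obtain ⟨c, d, hc, hd, hcd, rfl⟩ := this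
  refine ⟨c, d, hc, hd, hcd, ?_⟩
  ext
  · simp
  · simp [← add_mul, hcd]

theorem flatVR_cfg {V : Type} [Fintype V] (G : SimpleGraph V)
    (D : OrthDrawing G) (hpl : D.IsPlanar) (hflat : D.IsFlat) (hvr : D.IsVR)
    (hint : D.IntCoords) :
    ∃ C : VCfg V, (∀ v, (D.box v).y1 = C.y v) ∧ (∀ v, (D.box v).x1 = C.l v) ∧
      (∀ v, (D.box v).x2 = C.h v) ∧
      (∀ u v, G.Adj u v → C.E u v ∨ C.E v u ∨ C.Hor u v ∨ C.Hor v u) := by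
  obtain ⟨hbox, hch, hends, hcb, hcc⟩ := hpl
  have hbi : ∀ v, ∃ a b c : ℤ, (D.box v).y1 = a ∧ (D.box v).x1 = b ∧ (D.box v).x2 = c := by
    intro v
    have h1 : IsIntPt ((D.box v).x1, (D.box v).y1) := by
      apply hint; left; simp only [mem_iUnion]; exact ⟨v, by simp⟩
    have h2 : IsIntPt ((D.box v).x2, (D.box v).y1) := by
      apply hint; left; simp only [mem_iUnion]; exact ⟨v, by simp⟩
    obtain ⟨⟨b, hb⟩, ⟨a, ha⟩⟩ := h1
    obtain ⟨⟨c, hc⟩, -⟩ := h2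
    exact ⟨a, b, c, ha, hb, hc⟩
  choose y l h hy hl hh using hbi
  have hbm : ∀ v (P : Pt), P ∈ (D.box v).pts ↔ (l v : ℝ) ≤ P.1 ∧ P.1 ≤ h v ∧ P.2 = y v := by
    intro v P
    have := hflat v
    simp only [Box.pts, mem_prod, mem_Icc, ← this, hy, hl, hh]
    constructor
    · rintro ⟨⟨a, b⟩, c, d⟩; exact ⟨a, b, le_antisymm d c⟩
    · rintro ⟨a, b, c⟩; exact ⟨⟨a, b⟩, c.ge, c.le⟩
  have hlh : ∀ v, l v ≤ h v := by
    intro v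
    have := (D.box v).hx
    rw [hl, hh] at this
    exact_mod_cast this
  -- chains
  have hchain : ∀ u v, G.Adj u v → ∃ a b : ℤ,
      D.chain u v = [((a : ℝ), (y u : ℝ)), ((b : ℝ), (y v : ℝ))] ∧
      l u ≤ a ∧ a ≤ h u ∧ l v ≤ b ∧ b ≤ h v ∧ (a = b ∨ y u = y v) := by
    intro u v huv
    obtain ⟨P, Q, L, e, hP, hQ⟩ := hends u v huv
    have hlen := hvr u v huv
    rw [e] at hlen
    simp at hlen
    subst hlen
    simp only [List.nil_append] at e
    have hmem : ∀ R ∈ D.chain u v, IsIntPt R := by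
      intro R hR
      apply hint; right; simp only [mem_iUnion]; exact ⟨u, v, huv, hR⟩
    obtain ⟨⟨a, ha⟩, -⟩ := hmem P (by simp [e])
    obtain ⟨⟨b, hb⟩, -⟩ := hmem Q (by simp [e])
    rw [hbm] at hP hQ
    have ho := (hch u v huv).2.1 (P, Q) (by simp [e, chainSegs])
    simp only at ho
    rw [ha, hb, hP.2.2, hQ.2.2] at ho
    rw [ha] at hP
    rw [hb] at hQ
    refine ⟨a, b, ?_, by exact_mod_cast hP.1, by exact_mod_cast hP.2.1, by exact_mod_cast hQ.1,
      by exact_mod_cast hQ.2.1, by exact_mod_cast ho⟩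
    rw [e, ← ha, ← hb, ← hP.2.2, ← hQ.2.2]
  choose! p q hpq using hchain
  have hdisj : ∀ u v, u ≠ v → y u = y v → h u < l v ∨ h v < l u := by
    intro u v hne hyy
    by_contra hcon
    push Not at hcon
    have a1 := hlh u
    have a2 := hlh v
    have hm : ∀ P : Pt, P ∈ (D.box u).pts → P ∉ (D.box v).pts := fun P hP hP' =>
      Set.disjoint_left.1 (hbox u v hne) hP hP'
    refine hm (((max (l u) (l v) : ℤ) : ℝ), (y u : ℝ)) ?_ ?_
    · rw [hbm]
      exact ⟨Int.cast_le.2 (by omega), Int.cast_le.2 (by omega), rfl⟩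
    · rw [hbm]
      exact ⟨Int.cast_le.2 (by omega), Int.cast_le.2 (by omega), by rw [hyy]⟩
  have hcurve : ∀ u v, G.Adj u v → D.curve u v =
      segment ℝ (((p u v : ℝ), (y u : ℝ)) : Pt) ((q u v : ℝ), (y v : ℝ)) := by
    intro u v huv
    rw [OrthDrawing.curve, (hpq u v huv).1, chainSet_pair]
  have hev : ∀ u v, G.Adj u v → y u < y v → q u v = p u v := by
    intro u v huv hlt
    have := (hpq u v huv).2.2.2.2.2
    omega
  have hcross : ∀ u v w, (G.Adj u v ∧ y u < y v) → y u < y w → y w < y v →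
      p u v < l w ∨ h w < p u v := by
    rintro u v w ⟨huv, hlt⟩ h1 h2
    by_contra hcon
    push Not at hcon
    have hm : (((p u v : ℝ), (y w : ℝ)) : Pt) ∈ D.curve u v ∩ (D.box w).pts := by
      refine ⟨?_, ?_⟩
      · rw [hcurve u v huv, hev u v huv hlt]
        exact mem_vseg _ _ _ _ (by exact_mod_cast h1.le) (by exact_mod_cast h2.le)
      · rw [hbm]
        exact ⟨Int.cast_le.2 hcon.1, Int.cast_le.2 hcon.2, rfl⟩
    rcases hcb u v w huv hm with ⟨rfl, -⟩ | ⟨rfl, -⟩ <;> omega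
  have hee : ∀ u v u' v', (G.Adj u v ∧ y u < y v) → (G.Adj u' v' ∧ y u' < y v') →
      p u v = p u' v' → y u < y v' → y u' < y v → (u = u' ∧ v = v') := by
    rintro u v u' v' ⟨huv, hlt⟩ ⟨huv', hlt'⟩ hpp h1 h2
    by_contra hcon
    have hs : s(u, v) ≠ s(u', v') := by
      intro e
      rw [Sym2.eq_iff] at e
      rcases e with e | ⟨rfl, rfl⟩
      · exact hcon e
      · omega
    obtain ⟨t, t1, t2, t3, t4⟩ : ∃ t : ℝ, (y u : ℝ) < t ∧ t < y v ∧ (y u' : ℝ) < t ∧ t < y v' := by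
      have : max (y u : ℝ) (y u') < min (y v : ℝ) (y v') := by
        simp only [max_lt_iff, lt_min_iff]
        exact ⟨⟨Int.cast_lt.2 hlt, Int.cast_lt.2 h2⟩, Int.cast_lt.2 h1, Int.cast_lt.2 hlt'⟩
      obtain ⟨t, h1, h2⟩ := exists_between this
      simp only [max_lt_iff, lt_min_iff] at h1 h2
      exact ⟨t, h1.1, h2.1, h1.2, h2.2⟩
    have hm : (((p u v : ℝ), t) : Pt) ∈ D.curve u v ∩ D.curve u' v' := by
      refine ⟨?_, ?_⟩
      · rw [hcurve u v huv, hev u v huv hlt]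
        exact mem_vseg _ _ _ _ t1.le t2.le
      · rw [hcurve u' v' huv', hev u' v' huv' hlt', hpp]
        exact mem_vseg _ _ _ _ t3.le t4.le
    have := (hcc u v u' v' huv huv' hs hm).1
    rw [(hpq u v huv).1] at this
    simp at this
    rcases this with h | h
    · linarith
    · linarith [h.2]
  let C : VCfg V :=
    { y := y, l := l, h := h, E := fun u v => G.Adj u v ∧ y u < y v, p := p
      hlr := hlh
      hE := fun u v he => by
        have := hpq u v he.1
        have := hev u v he.1 he.2
        omega
      hdisj := hdisj
      hcross := hcross
      hee := hee }
  have hor : ∀ u v, G.Adj u v → y u = y v → h u < l v → C.Hor u v := by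
    intro u v huv hyy hlt
    have hq := hpq u v huv
    have hseg : ∀ t : ℤ, h u < t → t < l v → (((t : ℝ), (y u : ℝ)) : Pt) ∈ D.curve u v := by
      intro t h1 h2
      rw [hcurve u v huv, ← hyy]
      exact mem_hseg _ _ _ _ (by exact_mod_cast (by omega)) (by exact_mod_cast (by omega))
    refine ⟨hyy, hlt, ?_, ?_⟩
    · intro w hw n1 n2
      simp only [C] at *
      have d1 := hdisj w u n1 hw
      have d2 := hdisj w v n2 (hw.trans hyy)
      by_contra hcon
      push Not at hcon
      have := hlh w
      have := hlh u
      have := hlh v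
      have hm : (((l w : ℝ), (y u : ℝ)) : Pt) ∈ D.curve u v ∩ (D.box w).pts := by
        refine ⟨hseg _ (by omega) (by omega), ?_⟩
        rw [hbm]
        exact ⟨le_rfl, Int.cast_le.2 (hlh w), by rw [hw]⟩
      rcases hcb u v w huv hm with ⟨e, -⟩ | ⟨e, -⟩
      · exact n1 e
      · exact n2 e
    · rintro a b ⟨hab, hlt'⟩ h1 h2
      simp only [C] at *
      have d1 := hcross a b u ⟨hab, hlt'⟩ h1 h2
      have d2 := hcross a b v ⟨hab, hlt'⟩ (by omega) (by omega)
      by_contra hcon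
      push Not at hcon
      have hm : (((p a b : ℝ), (y u : ℝ)) : Pt) ∈ D.curve a b ∩ D.curve u v := by
        refine ⟨?_, hseg _ (by omega) (by omega)⟩
        rw [hcurve a b hab, hev a b hab hlt']
        exact mem_vseg _ _ _ _ (by exact_mod_cast h1.le) (by exact_mod_cast h2.le)
      have hs : s(a, b) ≠ s(u, v) := by
        intro e
        rw [Sym2.eq_iff] at e
        rcases e with ⟨rfl, rfl⟩ | ⟨rfl, rfl⟩ <;> omega
      have := (hcc a b u v hab huv hs hm).1
      rw [(hpq a b hab).1] at this
      simp at this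
      omega
  refine ⟨C, hy, hl, hh, fun u v huv => ?_⟩
  rcases lt_trichotomy (y u) (y v) with hlt | heq | hgt
  · exact Or.inl ⟨huv, hlt⟩
  · rcases hdisj u v huv.ne heq with h' | h'
    · exact Or.inr (Or.inr (Or.inl (hor u v huv heq h')))
    · exact Or.inr (Or.inr (Or.inr (hor v u huv.symm heq.symm h')))
  · exact Or.inr (Or.inl ⟨huv.symm, hgt⟩)
/-- Any planar flat visibility representation `D` of a finite simple
graph `G` can be transformed into a planar straight-line drawing `D'` of `G` with the
same y-coordinates (each vertex point gets the y-coordinate of its segment in `D`)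
and the same left-to-right order in each row; in particular `D'` has the same height. -/
theorem flatVR_to_straightLine {V : Type} [Fintype V] (G : SimpleGraph V)
    (D : OrthDrawing G) (hpl : D.IsPlanar) (hflat : D.IsFlat) (hvr : D.IsVR)
    (hint : D.IntCoords) :
    ∃ D' : PolylineDrawing G, D'.IsPlanar ∧ D'.IsStraightLine ∧ D'.IntCoords ∧
      (∀ v, (D'.pos v).2 = (D.box v).y1) ∧
      (∀ v w : V, (D.box v).y1 = (D.box w).y1 → (D.box v).x2 < (D.box w).x1 →
        (D'.pos v).1 < (D'.pos w).1) ∧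
      (∀ h : ℕ, D.InHeight h ↔ D'.InHeight h) := by
  obtain ⟨C, hy, hl, hh, hadj⟩ := flatVR_cfg G D hpl hflat hvr hint
  obtain ⟨Xi, hX⟩ := C.exists_int
  set X : V → ℝ := fun v => (Xi v : ℝ) with hXdef
  let D' : PolylineDrawing G :=
    { pos := fun v => (X v, (C.y v : ℝ)), bends := fun _ _ => [], bends_symm := by simp }
  have hchain : ∀ u v, D'.chain u v = [(X u, (C.y u : ℝ)), (X v, (C.y v : ℝ))] := fun u v => rfl
  have hcurve : ∀ u v, D'.curve u v = segment ℝ (X u, (C.y u : ℝ)) (X v, (C.y v : ℝ)) := by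
    intro u v
    rw [PolylineDrawing.curve, hchain, chainSet_pair]
  have hinj : Function.Injective D'.pos := by
    intro u v huv
    by_contra hne
    have h1 : X u = X v := congrArg Prod.fst huv
    have h2 : (C.y u : ℝ) = C.y v := congrArg Prod.snd huv
    have h2' : C.y u = C.y v := by exact_mod_cast h2
    rcases C.hdisj u v hne h2' with h | h
    · exact (C.X_lt X hX h2' h).ne h1
    · exact (C.X_lt X hX h2'.symm h).ne' h1
  have hon : ∀ u v, G.Adj u v → ∃ u' v', ((u' = u ∧ v' = v) ∨ (u' = v ∧ v' = u)) ∧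
      ∀ z ∈ D'.curve u v, C.OnC X u' v' z := by
    intro u v huv
    rcases hadj u v huv with h | h | h | h
    · refine ⟨u, v, Or.inl ⟨rfl, rfl⟩, fun z hz => ?_⟩
      rw [hcurve] at hz
      exact C.onC_of_mem X (Or.inl h) hz
    · refine ⟨v, u, Or.inr ⟨rfl, rfl⟩, fun z hz => ?_⟩
      rw [hcurve, segment_symm] at hz
      exact C.onC_of_mem X (Or.inl h) hz
    · refine ⟨u, v, Or.inl ⟨rfl, rfl⟩, fun z hz => ?_⟩
      rw [hcurve] at hz
      exact C.onC_of_mem X (Or.inr ⟨h, (C.X_lt X hX h.1 h.2.1).le⟩) hz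
    · refine ⟨v, u, Or.inr ⟨rfl, rfl⟩, fun z hz => ?_⟩
      rw [hcurve, segment_symm] at hz
      exact C.onC_of_mem X (Or.inr ⟨h, (C.X_lt X hX h.1 h.2.1).le⟩) hz
  have hpts : D'.points = Set.range D'.pos := by
    simp [PolylineDrawing.points, D']
  refine ⟨D', ⟨hinj, ?_, ?_, ?_⟩, fun _ _ => rfl, ?_, ?_, ?_, ?_⟩
  · intro u v huv
    rw [hchain]
    exact ⟨isSimpleChain_pair (fun e => huv.ne (hinj e)), genuineBends_pair _ _⟩
  · intro u v w huv n1 n2 hw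
    obtain ⟨u', v', huv', hz⟩ := hon u v huv
    have := C.onC_vertex X hX (hz _ hw)
    rcases huv' with ⟨rfl, rfl⟩ | ⟨rfl, rfl⟩ <;> tauto
  · rintro u v a b huv hab hne z ⟨hz1, hz2⟩
    obtain ⟨u', v', huv', h1⟩ := hon u v huv
    obtain ⟨a', b', hab', h2⟩ := hon a b hab
    have hne' : (u', v') ≠ (a', b') := by
      intro e
      apply hne
      simp only [Prod.mk.injEq] at e
      obtain ⟨rfl, rfl⟩ := e
      rw [Sym2.eq_iff]
      rcases huv' with ⟨rfl, rfl⟩ | ⟨rfl, rfl⟩ <;> rcases hab' with ⟨rfl, rfl⟩ | ⟨rfl, rfl⟩ <;> simp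
    obtain ⟨x, hx1, hx2, hx⟩ := C.onC_cross X hX (h1 z hz1) (h2 z hz2) hne'
    refine ⟨x, ⟨?_, ?_⟩, hx.symm⟩
    · rcases huv' with ⟨rfl, rfl⟩ | ⟨rfl, rfl⟩ <;> simp <;> tauto
    · rcases hab' with ⟨rfl, rfl⟩ | ⟨rfl, rfl⟩ <;> simp <;> tauto
  · intro P hP
    rw [hpts] at hP
    obtain ⟨v, rfl⟩ := hP
    exact ⟨⟨Xi v, rfl⟩, ⟨C.y v, rfl⟩⟩
  · intro v
    exact (hy v).symm
  · intro v w h1 h2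
    rw [hy, hy] at h1
    rw [hh, hl] at h2
    exact C.X_lt X hX (by exact_mod_cast h1) (by exact_mod_cast h2)
  · intro n
    have hyp : ∀ P ∈ D.points, ∃ v, P.2 = (C.y v : ℝ) := by
      rintro P (hP | hP)
      · simp only [mem_iUnion] at hP
        obtain ⟨v, hv⟩ := hP
        refine ⟨v, ?_⟩
        have := hflat v
        rw [← hy]
        rcases hv with rfl | rfl | rfl | rfl <;> simp [this]
      · simp only [mem_iUnion] at hP
        obtain ⟨u, v, huv, hP⟩ := hP
        obtain ⟨A, B, L, e, hA, hB⟩ := hpl.2.2.1 u v huv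
        have hlen := hvr u v huv
        rw [e] at hlen
        simp at hlen
        subst hlen
        have hbox : ∀ w (Q : Pt), Q ∈ (D.box w).pts → Q.2 = (C.y w : ℝ) := by
          intro w Q hQ
          have := hQ.2
          rw [← hflat w, hy] at this
          exact le_antisymm this.2 this.1
        simp only [mem_setOf_eq, e] at hP
        simp at hP
        rcases hP with rfl | rfl
        · exact ⟨u, hbox u _ hA⟩
        · exact ⟨v, hbox v _ hB⟩
    constructor
    · rintro ⟨y0, h0⟩
      refine ⟨y0, ?_⟩
      rw [hpts]
      rintro _ ⟨v, rfl⟩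
      have := h0 ((D.box v).x1, (D.box v).y1) (by
        left; simp only [mem_iUnion]; exact ⟨v, by simp⟩)
      simp only [hy] at this
      exact this
    · rintro ⟨y0, h0⟩
      refine ⟨y0, fun P hP => ?_⟩
      obtain ⟨v, hv⟩ := hyp P hP
      rw [hv]
      exact h0 (D'.pos v) (by rw [hpts]; exact ⟨v, rfl⟩)
end

section
/- There is an absolute constant c such that the following holds: if Γ is a flat visibility representation of height 3 of a finite simple planar graph G with n vertices, then G has a planar straight-line drawing with the same y-coordinates as Γ, the same left-to-right order in each row, and width at most c·n. -/
open Set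

namespace FlatThree

/-- Combinatorial data extracted from a flat visibility representation of height three. -/
structure Data {V : Type} (G : SimpleGraph V) where
  a : V → ℝ
  b : V → ℝ
  y : V → ℝ
  c : V → V → ℝ
  y0 : ℝ
  hab : ∀ v, a v ≤ b v
  hrow : ∀ u v, u ≠ v → y u = y v → b u < a v ∨ b v < a u
  hy : ∀ v, y v = y0 ∨ y v = y0 + 1 ∨ y v = y0 + 2
  hc : ∀ u v, G.Adj u v → y u < y v → a u ≤ c u v ∧ c u v ≤ b u ∧ a v ≤ c u v ∧ c u v ≤ b v
  hmid : ∀ u v w, G.Adj u v → y u < y w → y w < y v → c u v < a w ∨ b w < c u v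
  hsame : ∀ u v x z, G.Adj u v → y u < y v → G.Adj x z → y x < y z → ¬ (u = x ∧ v = z) →
    c u v = c x z → ∀ k, y u ≤ k → k ≤ y v → y x ≤ k → k ≤ y z →
      (k = y u ∨ k = y v) ∧ (k = y x ∨ k = y z)
  hhor : ∀ u v w, G.Adj u v → y u = y v → b u < a v → y w = y u → b u < a w → b w < a v → False
  hcross : ∀ u v x z, G.Adj u v → y u = y v → b u < a v → G.Adj x z → y x < y u → y u < y z →
    b u < c x z → c x z < a v → False

namespace Data

variable {V : Type} [Fintype V] {G : SimpleGraph V} (D : Data G)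

/-- A long edge, from the bottom row to the top row. -/
def TB (s t : V) : Prop := G.Adj s t ∧ D.y s = D.y0 ∧ D.y t = D.y0 + 2

lemma TB.lt {D : Data G} {s t : V} (h : D.TB s t) : D.y s < D.y t := by
  rw [h.2.1, h.2.2]; linarith

lemma le_of_row {u v : V} (h : D.y u = D.y v) {c c' : ℝ} (hcc : c ≤ c')
    (h1 : D.a u ≤ c) (h4 : c' ≤ D.b v) : u = v ∨ D.b u < D.a v := by
  by_cases e : u = v
  · exact Or.inl e
  · rcases D.hrow u v e h with h | h
    · exact Or.inr h
    · linarith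

open Classical in
/-- The set counted by the coordinate of a vertex in the top or bottom row. -/
noncomputable def S (v : V) : Finset V :=
  Finset.univ.filter fun w => (D.y w = D.y v ∧ D.b w < D.a v) ∨
    (D.y w = D.y0 + 1 ∧ ∃ s t, D.TB s t ∧ D.b w < D.c s t ∧
      ((D.y s = D.y v ∧ D.b s ≤ D.b v) ∨ (D.y t = D.y v ∧ D.b t ≤ D.b v)))

lemma mem_S (v w : V) : w ∈ D.S v ↔ (D.y w = D.y v ∧ D.b w < D.a v) ∨
    (D.y w = D.y0 + 1 ∧ ∃ s t, D.TB s t ∧ D.b w < D.c s t ∧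
      ((D.y s = D.y v ∧ D.b s ≤ D.b v) ∨ (D.y t = D.y v ∧ D.b t ≤ D.b v))) := by
  simp [S]

lemma S_subset {u v : V} (h : D.y u = D.y v) (h' : u = v ∨ D.b u < D.a v) : D.S u ⊆ D.S v := by
  rcases h' with rfl | h'
  · exact subset_rfl
  intro w hw
  have hu := D.hab u
  have hv := D.hab v
  rw [mem_S] at hw ⊢
  rcases hw with ⟨h1, h2⟩ | ⟨h1, s, t, h2, h3, h4⟩
  · left; exact ⟨h1.trans h, by linarith⟩
  · right
    refine ⟨h1, s, t, h2, h3, ?_⟩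
    rcases h4 with h4 | h4
    · left; exact ⟨h4.1.trans h, by linarith⟩
    · right; exact ⟨h4.1.trans h, by linarith⟩

lemma self_mem_S {u v : V} (h : D.y u = D.y v) (h' : D.b u < D.a v) : u ∈ D.S v := by
  rw [mem_S]; exact Or.inl ⟨h, h'⟩

lemma self_not_mem_S {u : V} (h : D.y u ≠ D.y0 + 1) : u ∉ D.S u := by
  rw [mem_S]
  rintro (⟨_, h1⟩ | ⟨h1, _⟩)
  · have := D.hab u; linarith
  · exact h h1

lemma S_card_lt {u v : V} (h : D.y u = D.y v) (h' : D.b u < D.a v) (hm : D.y u ≠ D.y0 + 1) :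
    (D.S u).card < (D.S v).card := by
  apply Finset.card_lt_card
  refine ⟨D.S_subset h (Or.inr h'), fun hs => D.self_not_mem_S hm (hs (D.self_mem_S h h'))⟩

lemma TB.left_mem {D : Data G} {s t w : V} (h : D.TB s t) (hw : D.y w = D.y0 + 1)
    (hb : D.b w < D.c s t) : w ∈ D.S s ∧ w ∈ D.S t := by
  rw [mem_S, mem_S]
  exact ⟨Or.inr ⟨hw, s, t, h, hb, Or.inl ⟨rfl, le_rfl⟩⟩,
    Or.inr ⟨hw, s, t, h, hb, Or.inr ⟨rfl, le_rfl⟩⟩⟩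

lemma TB.not_both {D : Data G} {s t w : V} (h : D.TB s t) (hw : D.y w = D.y0 + 1)
    (hb : D.c s t < D.a w) : ¬ (w ∈ D.S s ∧ w ∈ D.S t) := by
  have hab := D.hab w
  have hst := D.hc s t h.1 h.lt
  rintro ⟨h1, h2⟩
  rw [mem_S] at h1 h2
  rcases h1 with ⟨h1, _⟩ | ⟨_, s2, t2, k2, l2, m2⟩
  · rw [hw, h.2.1] at h1; linarith
  rcases h2 with ⟨h2, _⟩ | ⟨_, s3, t3, k3, l3, m3⟩
  · rw [hw, h.2.2] at h2; linarith
  rcases m2 with ⟨m2, n2⟩ | ⟨m2, _⟩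
  swap
  · rw [k2.2.2, h.2.1] at m2; linarith
  rcases m3 with ⟨m3, _⟩ | ⟨m3, n3⟩
  · rw [k3.2.1, h.2.2] at m3; linarith
  have hc2 := D.hc s2 t2 k2.1 k2.lt
  have hc3 := D.hc s3 t3 k3.1 k3.lt
  have e2 : s = s2 := by
    rcases D.le_of_row (u := s) (v := s2) m2.symm (c := D.c s t) (c' := D.c s2 t2)
      (by linarith) hst.1 hc2.2.1 with e | e
    · exact e
    · have := D.hab s2; linarith
  have e3 : t = t3 := by
    rcases D.le_of_row (u := t) (v := t3) m3.symm (c := D.c s t) (c' := D.c s3 t3)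
      (by linarith) hst.2.2.1 hc3.2.2.2 with e | e
    · exact e
    · have := D.hab t3; linarith
  subst e2 e3
  rcases le_total (D.c s t2) (D.c s3 t) with hle | hle
  · have yy : D.y t = D.y t2 := by rw [h.2.2, k2.2.2]
    rcases D.le_of_row yy (c := D.c s t) (c' := D.c s t2) (by linarith) hst.2.2.1 hc2.2.2.2
      with e | e
    · subst e; linarith
    rcases D.le_of_row yy.symm hle hc2.2.2.1 hc3.2.2.2 with e' | e'
    · subst e'; linarith
    · have := D.hab t2; have := D.hab t; linarith
  · have yy : D.y s = D.y s3 := by rw [h.2.1, k3.2.1]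
    rcases D.le_of_row yy (c := D.c s t) (c' := D.c s3 t) (by linarith) hst.1 hc3.2.1
      with e | e
    · subst e; linarith
    rcases D.le_of_row yy.symm hle hc3.1 hc2.2.1 with e' | e'
    · subst e'; linarith
    · have := D.hab s3; have := D.hab s; linarith

/-- Key counting lemma. -/
lemma TB.count {D : Data G} {s t s' t' : V} (h : D.TB s t) (h' : D.TB s' t')
    (hlt : D.c s t < D.c s' t') (C : Finset V)
    (hC : ∀ w ∈ C, D.y w = D.y0 + 1 ∧ D.c s t < D.a w ∧ D.b w < D.c s' t') :
    (D.S s).card + (D.S t).card + C.card < (D.S s').card + (D.S t').card := by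
  classical
  have hst := D.hc s t h.1 h.lt
  have hst' := D.hc s' t' h'.1 h'.lt
  have ys : D.y s = D.y s' := by rw [h.2.1, h'.2.1]
  have yt : D.y t = D.y t' := by rw [h.2.2, h'.2.2]
  have os := D.le_of_row ys hlt.le hst.1 hst'.2.1
  have ot := D.le_of_row yt hlt.le hst.2.2.1 hst'.2.2.2
  have subs := D.S_subset ys os
  have subt := D.S_subset yt ot
  have cs := Finset.card_sdiff_add_card_eq_card subs
  have ct := Finset.card_sdiff_add_card_eq_card subt
  have ms : D.y s ≠ D.y0 + 1 := by rw [h.2.1]; linarith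
  have mt : D.y t ≠ D.y0 + 1 := by rw [h.2.2]; intro; linarith
  have hsub : C ⊆ (D.S s' \ D.S s) ∪ (D.S t' \ D.S t) := by
    intro w hw
    obtain ⟨w1, w2, w3⟩ := hC w hw
    have i1 := h'.left_mem w1 w3
    have i2 := h.not_both w1 w2
    simp only [Finset.mem_union, Finset.mem_sdiff]
    tauto
  obtain ⟨q, hq, hqC⟩ : ∃ q, q ∈ (D.S s' \ D.S s) ∪ (D.S t' \ D.S t) ∧ q ∉ C := by
    rcases os with e | e
    · rcases ot with e' | e'
      · subst e e'; exact absurd hlt (lt_irrefl _)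
      · refine ⟨t, ?_, fun hh => mt (hC t hh).1⟩
        simp only [Finset.mem_union, Finset.mem_sdiff]
        exact Or.inr ⟨D.self_mem_S yt e', D.self_not_mem_S mt⟩
    · refine ⟨s, ?_, fun hh => ms (hC s hh).1⟩
      simp only [Finset.mem_union, Finset.mem_sdiff]
      exact Or.inl ⟨D.self_mem_S ys e, D.self_not_mem_S ms⟩
  have k1 : (insert q C).card ≤ ((D.S s' \ D.S s) ∪ (D.S t' \ D.S t)).card :=
    Finset.card_le_card (Finset.insert_subset hq hsub)
  rw [Finset.card_insert_of_notMem hqC] at k1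
  have k2 := Finset.card_union_le (D.S s' \ D.S s) (D.S t' \ D.S t)
  omega

open Classical in
/-- Middle-row vertices up to `m`. -/
noncomputable def base (m : V) : Finset V :=
  Finset.univ.filter fun w => D.y w = D.y0 + 1 ∧ D.b w ≤ D.b m

open Classical in
/-- Middle-row vertices up to `m` and to the right of the column `c`. -/
noncomputable def cnt (c : ℝ) (m : V) : Finset V :=
  Finset.univ.filter fun w => D.y w = D.y0 + 1 ∧ c < D.a w ∧ D.b w ≤ D.b m

open Classical in
/-- The lower bound on the coordinate of `m` induced by a pair of vertices. -/
noncomputable def term (m : V) (p : V × V) : ℕ :=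
  if D.TB p.1 p.2 ∧ D.c p.1 p.2 < D.a m then
    (D.S p.1).card + (D.S p.2).card + (D.cnt (D.c p.1 p.2) m).card else 0

/-- The coordinate of a vertex in the middle row. -/
noncomputable def X (m : V) : ℕ :=
  max (D.base m).card (Finset.univ.sup (D.term m))

lemma base_le (m : V) : (D.base m).card ≤ D.X m := le_max_left _ _

lemma term_le (m : V) {s t : V} (h : D.TB s t) (hc : D.c s t < D.a m) :
    (D.S s).card + (D.S t).card + (D.cnt (D.c s t) m).card ≤ D.X m := by
  have h1 : D.term m (s, t) ≤ Finset.univ.sup (D.term m) := Finset.le_sup (Finset.mem_univ _)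
  have h2 : D.term m (s, t) = (D.S s).card + (D.S t).card + (D.cnt (D.c s t) m).card := by
    unfold term; rw [if_pos ⟨h, hc⟩]
  rw [← h2]
  exact h1.trans (le_max_right _ _)

lemma X_lt {m : V} {N : ℕ} (h1 : (D.base m).card < N)
    (h2 : ∀ s t, D.TB s t → D.c s t < D.a m →
      (D.S s).card + (D.S t).card + (D.cnt (D.c s t) m).card < N) : D.X m < N := by
  refine max_lt h1 ?_
  rw [Finset.sup_lt_iff (by simpa using (Nat.zero_le _).trans_lt h1)]
  rintro ⟨s, t⟩ -
  unfold term
  split_ifs with h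
  · exact h2 s t h.1 h.2
  · exact (Nat.zero_le _).trans_lt h1

lemma self_mem_base {m : V} (hm : D.y m = D.y0 + 1) : m ∈ D.base m := by
  simp [base, hm]

lemma X_mono {m m' : V} (hm : D.y m = D.y0 + 1) (hm' : D.y m' = D.y0 + 1)
    (h : D.b m < D.a m') : D.X m < D.X m' := by
  have k := D.hab m
  have k' := D.hab m'
  refine D.X_lt ((Finset.card_lt_card ?_).trans_le (D.base_le m')) ?_
  · rw [Finset.ssubset_iff_of_subset]
    · refine ⟨m', D.self_mem_base hm', ?_⟩
      simp only [base, Finset.mem_filter, not_and, not_le]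
      intros; linarith
    · intro w
      simp only [base, Finset.mem_filter]
      rintro ⟨h1, h2, h3⟩
      exact ⟨h1, h2, by linarith⟩
  · intro s t hst hc
    refine lt_of_lt_of_le ?_ (D.term_le m' hst (by linarith))
    have : (D.cnt (D.c s t) m).card < (D.cnt (D.c s t) m').card := by
      apply Finset.card_lt_card
      rw [Finset.ssubset_iff_of_subset]
      · refine ⟨m', ?_, ?_⟩
        · simp only [cnt, Finset.mem_filter, Finset.mem_univ, true_and]
          exact ⟨hm', by linarith, le_rfl⟩
        simp only [cnt, Finset.mem_filter, not_and, not_le]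
        intros; linarith
      · intro w
        simp only [cnt, Finset.mem_filter]
        rintro ⟨h1, h2, h3, h4⟩
        exact ⟨h1, h2, h3, by linarith⟩
    omega

lemma X_gt {m s t : V} (hm : D.y m = D.y0 + 1) (hst : D.TB s t) (hc : D.c s t < D.a m) :
    (D.S s).card + (D.S t).card < D.X m := by
  refine lt_of_lt_of_le ?_ (D.term_le m hst hc)
  have : 0 < (D.cnt (D.c s t) m).card := by
    rw [Finset.card_pos]
    refine ⟨m, ?_⟩
    simp only [cnt, Finset.mem_filter, Finset.mem_univ, true_and]
    exact ⟨hm, hc, le_rfl⟩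
  omega

lemma X_lt_of {m s t : V} (hm : D.y m = D.y0 + 1) (hst : D.TB s t) (hc : D.b m < D.c s t) :
    D.X m < (D.S s).card + (D.S t).card := by
  have hab := D.hab m
  apply D.X_lt
  · have h0 : 0 < (D.base m).card := Finset.card_pos.2 ⟨m, D.self_mem_base hm⟩
    have h1 : D.base m ⊆ D.S s ∧ D.base m ⊆ D.S t := by
      constructor <;> intro w <;> simp only [base, Finset.mem_filter] <;> rintro ⟨_, h2, h3⟩
      · exact (hst.left_mem h2 (by linarith)).1
      · exact (hst.left_mem h2 (by linarith)).2
    have := Finset.card_le_card h1.1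
    have := Finset.card_le_card h1.2
    omega
  · intro s' t' hst' hc'
    apply hst'.count hst (by linarith)
    intro w
    simp only [cnt, Finset.mem_filter, Finset.mem_univ, true_and]
    rintro ⟨h1, h2, h3⟩
    exact ⟨h1, h2, by linarith⟩

open Classical in
/-- The new x-coordinate of a vertex. -/
noncomputable def pos (v : V) : ℕ :=
  if D.y v = D.y0 + 1 then D.X v else 2 * (D.S v).card

lemma pos_mid {v : V} (h : D.y v = D.y0 + 1) : D.pos v = D.X v := if_pos h
lemma pos_out {v : V} (h : D.y v ≠ D.y0 + 1) : D.pos v = 2 * (D.S v).card := if_neg h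

lemma TB.pos {D : Data G} {s t : V} (h : D.TB s t) :
    D.pos s = 2 * (D.S s).card ∧ D.pos t = 2 * (D.S t).card := by
  constructor
  · apply D.pos_out; rw [h.2.1]; linarith
  · apply D.pos_out; rw [h.2.2]; intro; linarith

lemma pos_lt {u v : V} (h : D.y u = D.y v) (h' : D.b u < D.a v) : D.pos u < D.pos v := by
  by_cases e : D.y u = D.y0 + 1
  · rw [D.pos_mid e, D.pos_mid (h ▸ e)]
    exact D.X_mono e (h ▸ e) h'
  · rw [D.pos_out e, D.pos_out (h ▸ e)]
    have := D.S_card_lt h h' e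
    omega

lemma pos_le (v : V) : D.pos v ≤ 3 * Fintype.card V := by
  have hn : 0 < Fintype.card V := Fintype.card_pos_iff.2 ⟨v⟩
  by_cases e : D.y v = D.y0 + 1
  · rw [D.pos_mid e]
    apply Nat.le_of_lt_succ
    apply D.X_lt
    · have := Finset.card_le_univ (D.base v); omega
    · intro s t _ _
      have := Finset.card_le_univ (D.S s)
      have := Finset.card_le_univ (D.S t)
      have := Finset.card_le_univ (D.cnt (D.c s t) v)
      omega
  · rw [D.pos_out e]
    have := Finset.card_le_univ (D.S v); omega

lemma pos_inj {u v : V} (h : D.y u = D.y v) (h' : D.pos u = D.pos v) : u = v := by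
  by_contra e
  rcases D.hrow u v e h with k | k
  · have := D.pos_lt h k; omega
  · have := D.pos_lt h.symm k; omega

lemma TB.left {D : Data G} {s t w : V} (h : D.TB s t) (hw : D.y w = D.y0 + 1)
    (hb : D.b w < D.c s t) : 2 * D.pos w < D.pos s + D.pos t := by
  rw [h.pos.1, h.pos.2, D.pos_mid hw]
  have := D.X_lt_of hw h hb; omega

lemma TB.right {D : Data G} {s t w : V} (h : D.TB s t) (hw : D.y w = D.y0 + 1)
    (hb : D.c s t < D.a w) : D.pos s + D.pos t < 2 * D.pos w := by
  rw [h.pos.1, h.pos.2, D.pos_mid hw]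
  have := D.X_gt hw h hb; omega

lemma TB.mid {D : Data G} {s t s' t' : V} (h : D.TB s t) (h' : D.TB s' t')
    (hlt : D.c s t < D.c s' t') : D.pos s + D.pos t < D.pos s' + D.pos t' := by
  rw [h.pos.1, h.pos.2, h'.pos.1, h'.pos.2]
  have := h.count h' hlt ∅ (by simp)
  simp at this
  omega

/-- The x-coordinate at height `k` of the straight line through the new positions of `u`, `v`. -/
noncomputable def L (u v : V) (k : ℝ) : ℝ :=
  D.pos u + (k - D.y u) / (D.y v - D.y u) * (D.pos v - D.pos u)

/-- The new position of a vertex. -/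
noncomputable def P (v : V) : Pt := ((D.pos v : ℝ), D.y v)

lemma P_inj {u v : V} (h : D.P u = D.P v) : u = v := by
  simp only [P, Prod.mk.injEq, Nat.cast_inj] at h
  exact D.pos_inj h.2 h.1

lemma seg_vert {u v : V} (h : D.y u < D.y v) {p : Pt} (hp : p ∈ segment ℝ (D.P u) (D.P v)) :
    D.y u ≤ p.2 ∧ p.2 ≤ D.y v ∧ p.1 = D.L u v p.2 := by
  obtain ⟨s, t, hs, ht, hst, rfl⟩ := hp
  obtain rfl : s = 1 - t := by linarith
  simp only [P, L, Prod.smul_mk, Prod.mk_add_mk, smul_eq_mul]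
  have hd : D.y v - D.y u ≠ 0 := by intro; linarith
  refine ⟨by nlinarith, by nlinarith, ?_⟩
  have : ((1 - t) * D.y u + t * D.y v - D.y u) / (D.y v - D.y u) = t := by
    field_simp; ring
  rw [this]; ring

lemma seg_hor {u v : V} (h : D.y u = D.y v) (hl : D.b u < D.a v) {p : Pt}
    (hp : p ∈ segment ℝ (D.P u) (D.P v)) :
    p.2 = D.y u ∧ D.pos u ≤ p.1 ∧ p.1 ≤ D.pos v := by
  have hlt : (D.pos u : ℝ) < D.pos v := by exact_mod_cast D.pos_lt h hl
  obtain ⟨s, t, hs, ht, hst, rfl⟩ := hp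
  obtain rfl : s = 1 - t := by linarith
  simp only [P, Prod.smul_mk, Prod.mk_add_mk, smul_eq_mul]
  refine ⟨by rw [← h]; ring, by nlinarith, by nlinarith⟩

lemma at_level {u v : V} (hadj : G.Adj u v) (h : D.y u < D.y v) {k : ℝ}
    (hk : k = D.y0 ∨ k = D.y0 + 1 ∨ k = D.y0 + 2) (h1 : D.y u ≤ k) (h2 : k ≤ D.y v) :
    (∃ w, (w = u ∨ w = v) ∧ D.y w = k ∧ D.a w ≤ D.c u v ∧ D.c u v ≤ D.b w ∧ D.L u v k = D.pos w) ∨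
    (D.TB u v ∧ k = D.y0 + 1 ∧ D.L u v k = (D.pos u + D.pos v) / 2) := by
  have hc := D.hc u v hadj h
  have hd : D.y v - D.y u ≠ 0 := by intro; linarith
  rcases eq_or_lt_of_le h1 with e | h1
  · left; exact ⟨u, Or.inl rfl, e, hc.1, hc.2.1, by simp [L, e]⟩
  rcases eq_or_lt_of_le h2 with e | h2
  · left
    refine ⟨v, Or.inr rfl, e.symm, hc.2.2.1, hc.2.2.2, ?_⟩
    rw [L, e, div_self hd]; ring
  right
  have hu := D.hy u
  have hv := D.hy v
  have e1 : D.y u = D.y0 := by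
    rcases hu with e | e | e <;> rcases hv with e' | e' | e' <;> rcases hk with e'' | e'' | e'' <;>
      first | exact e | (exfalso; linarith)
  have e2 : D.y v = D.y0 + 2 := by
    rcases hv with e' | e' | e' <;> rcases hk with e'' | e'' | e'' <;>
      first | exact e' | (exfalso; linarith)
  have e3 : k = D.y0 + 1 := by
    rcases hk with e'' | e'' | e'' <;>
      first | exact e'' | (exfalso; linarith)
  refine ⟨⟨hadj, e1, e2⟩, e3, ?_⟩
  rw [L, e1, e2, e3]; ring

lemma order_aux {u v x z : V} (h1 : G.Adj u v) (l1 : D.y u < D.y v) (h2 : G.Adj x z)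
    (l2 : D.y x < D.y z) (hne : ¬ (u = x ∧ v = z)) (hc : D.c u v ≤ D.c x z) {k : ℝ}
    (hk : k = D.y0 ∨ k = D.y0 + 1 ∨ k = D.y0 + 2)
    (k1 : D.y u ≤ k) (k2 : k ≤ D.y v) (k3 : D.y x ≤ k) (k4 : k ≤ D.y z) :
    D.L u v k ≤ D.L x z k ∧
      (D.L u v k = D.L x z k → ∃ w, (w = u ∨ w = v) ∧ (w = x ∨ w = z) ∧ D.y w = k ∧
        D.L u v k = D.pos w) := by
  have hs := D.hsame u v x z h1 l1 h2 l2 hne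
  rcases D.at_level h1 l1 hk k1 k2 with ⟨w, w1, w2, w3, w4, w5⟩ | ⟨w1, w2, w3⟩
  · rcases D.at_level h2 l2 hk k3 k4 with ⟨q, q1, q2, q3, q4, q5⟩ | ⟨q1, q2, q3⟩
    · rcases D.le_of_row (w2.trans q2.symm) hc w3 q4 with e | e
      · subst e
        exact ⟨by rw [w5, q5], fun _ => ⟨w, w1, q1, w2, w5⟩⟩
      · have := D.pos_lt (w2.trans q2.symm) e
        have : (D.pos w : ℝ) < D.pos q := by exact_mod_cast this
        exact ⟨by linarith, fun _ => by linarith⟩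
    · have hb : D.b w < D.c x z := by
        rcases D.hmid x z w h2 (by rw [q1.2.1]; linarith) (by rw [q1.2.2]; linarith) with e | e
        · linarith
        · exact e
      have := q1.left (by linarith) hb
      have : 2 * (D.pos w : ℝ) < D.pos x + D.pos z := by exact_mod_cast this
      exact ⟨by linarith, fun _ => by linarith⟩
  · rcases D.at_level h2 l2 hk k3 k4 with ⟨q, q1, q2, q3, q4, q5⟩ | ⟨q1, q2, q3⟩
    · have hb : D.c u v < D.a q := by
        rcases D.hmid u v q h1 (by rw [w1.2.1]; linarith) (by rw [w1.2.2]; linarith) with e | e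
        · exact e
        · linarith
      have := w1.right (by linarith) hb
      have : (D.pos u + D.pos v : ℝ) < 2 * D.pos q := by exact_mod_cast this
      exact ⟨by linarith, fun _ => by linarith⟩
    · rcases eq_or_lt_of_le hc with e | e
      · exfalso
        have := hs e k k1 k2 k3 k4
        rw [w1.2.1, w1.2.2] at this
        rcases this.1 with e | e <;> linarith
      · have := w1.mid q1 e
        have : (D.pos u + D.pos v : ℝ) < D.pos x + D.pos z := by exact_mod_cast this
        exact ⟨by linarith, fun _ => by linarith⟩

lemma affine_aux {α β a b h : ℝ} (h1 : a ≤ h) (h2 : h ≤ b) (ha : 0 ≤ α + β * a)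
    (hb : 0 ≤ α + β * b) (hz : α + β * h = 0) :
    h = a ∨ h = b ∨ (a < b ∧ α + β * a = 0 ∧ α + β * b = 0) := by
  rcases eq_or_lt_of_le h1 with e | h1
  · exact Or.inl e.symm
  rcases eq_or_lt_of_le h2 with e | h2
  · exact Or.inr (Or.inl e)
  refine Or.inr (Or.inr ⟨by linarith, ?_⟩)
  have : β = 0 := by
    rcases lt_trichotomy β 0 with h | h | h
    · nlinarith
    · exact h
    · nlinarith
  subst this
  constructor <;> linarith

lemma L_affine (u v x z : V) : ∃ α β : ℝ, ∀ k, D.L x z k - D.L u v k = α + β * k := by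
  refine ⟨D.pos x - D.y x / (D.y z - D.y x) * (D.pos z - D.pos x) -
    (D.pos u - D.y u / (D.y v - D.y u) * (D.pos v - D.pos u)),
    (D.pos z - D.pos x) / (D.y z - D.y x) - (D.pos v - D.pos u) / (D.y v - D.y u), fun k => ?_⟩
  simp only [L]; ring

lemma vert_vert {u v x z : V} (h1 : G.Adj u v) (l1 : D.y u < D.y v) (h2 : G.Adj x z)
    (l2 : D.y x < D.y z) (hne : ¬ (u = x ∧ v = z)) {p : Pt}
    (hp : p ∈ segment ℝ (D.P u) (D.P v)) (hp' : p ∈ segment ℝ (D.P x) (D.P z)) :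
    ∃ w, (w = u ∨ w = v) ∧ (w = x ∨ w = z) ∧ p = D.P w := by
  wlog hc : D.c u v ≤ D.c x z generalizing u v x z with H
  · obtain ⟨w, w1, w2, w3⟩ := H h2 l2 h1 l1 (fun e => hne ⟨e.1.symm, e.2.symm⟩) hp' hp
      (le_of_not_ge hc)
    exact ⟨w, w2, w1, w3⟩
  obtain ⟨a1, a2, a3⟩ := D.seg_vert l1 hp
  obtain ⟨b1, b2, b3⟩ := D.seg_vert l2 hp'
  obtain ⟨α, β, hL⟩ := D.L_affine u v x z
  have main := fun k hk k1 k2 k3 k4 => D.order_aux h1 l1 h2 l2 hne hc (k := k) hk k1 k2 k3 k4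
  have hkm : ∀ a b : ℝ, (a = D.y0 ∨ a = D.y0 + 1 ∨ a = D.y0 + 2) →
      (b = D.y0 ∨ b = D.y0 + 1 ∨ b = D.y0 + 2) →
      (max a b = D.y0 ∨ max a b = D.y0 + 1 ∨ max a b = D.y0 + 2) ∧
      (min a b = D.y0 ∨ min a b = D.y0 + 1 ∨ min a b = D.y0 + 2) := by
    intro a b ha hb
    rcases max_choice a b with e | e <;> rcases min_choice a b with e' | e' <;> rw [e, e'] <;>
      exact ⟨by assumption, by assumption⟩
  have hA := (hkm _ _ (D.hy u) (D.hy x)).1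
  have hB := (hkm _ _ (D.hy v) (D.hy z)).2
  have g1 := le_max_left (D.y u) (D.y x)
  have g2 := le_max_right (D.y u) (D.y x)
  have g3 := min_le_left (D.y v) (D.y z)
  have g4 := min_le_right (D.y v) (D.y z)
  have hAp : max (D.y u) (D.y x) ≤ p.2 := max_le a1 b1
  have hBp : p.2 ≤ min (D.y v) (D.y z) := le_min a2 b2
  generalize max (D.y u) (D.y x) = A at *
  generalize min (D.y v) (D.y z) = B at *
  have mA := main A hA g1 (by linarith) g2 (by linarith)
  have mB := main B hB (by linarith) g3 (by linarith) g4
  have lA := hL A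
  have lB := hL B
  have lp := hL p.2
  rcases affine_aux hAp hBp (α := α) (β := β) (by linarith) (by linarith) (by linarith)
    with e | e | ⟨e, e1, e2⟩
  · obtain ⟨w, w1, w2, w3, w4⟩ := mA.2 (by rw [← e]; linarith)
    exact ⟨w, w1, w2, Prod.ext (by rw [a3, e, w4]; rfl) (by rw [e, ← w3]; rfl)⟩
  · obtain ⟨w, w1, w2, w3, w4⟩ := mB.2 (by rw [← e]; linarith)
    exact ⟨w, w1, w2, Prod.ext (by rw [a3, e, w4]; rfl) (by rw [e, ← w3]; rfl)⟩
  · exfalso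
    obtain ⟨w, w1, w2, w3, -⟩ := mA.2 (by linarith)
    obtain ⟨q, q1, q2, q3, -⟩ := mB.2 (by linarith)
    have hwq : D.y w < D.y q := by linarith
    apply hne
    rcases w1 with rfl | rfl <;> rcases w2 with rfl | rfl <;> rcases q1 with rfl | rfl <;>
      rcases q2 with e | e <;> subst_vars <;> first | exact ⟨rfl, rfl⟩ | (exfalso; linarith)

lemma row_cases {u v w : V} (h1 : G.Adj u v) (h : D.y u = D.y v) (hl : D.b u < D.a v)
    (hw : D.y w = D.y u) (k1 : D.pos u ≤ D.pos w) (k2 : D.pos w ≤ D.pos v) : w = u ∨ w = v := by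
  by_contra hcon
  push Not at hcon
  rcases D.hrow w u hcon.1 hw with e | e
  · have := D.pos_lt hw e; omega
  rcases D.hrow w v hcon.2 (hw.trans h) with e' | e'
  · exact D.hhor u v w h1 h hl hw e e'
  · have := D.pos_lt (hw.trans h).symm e'; omega

lemma hor_vert {u v x z : V} (h1 : G.Adj u v) (l1 : D.y u = D.y v) (hl : D.b u < D.a v)
    (h2 : G.Adj x z) (l2 : D.y x < D.y z) {p : Pt}
    (hp : p ∈ segment ℝ (D.P u) (D.P v)) (hp' : p ∈ segment ℝ (D.P x) (D.P z)) :
    ∃ w, (w = u ∨ w = v) ∧ (w = x ∨ w = z) ∧ p = D.P w := by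
  obtain ⟨a1, a2, a3⟩ := D.seg_hor l1 hl hp
  obtain ⟨b1, b2, b3⟩ := D.seg_vert l2 hp'
  have hk := D.hy u
  rw [← a1] at hk
  rcases D.at_level h2 l2 hk b1 b2 with ⟨q, q1, q2, q3, q4, q5⟩ | ⟨q1, q2, q3⟩
  · rw [b3, q5] at a2 a3
    refine ⟨q, D.row_cases h1 l1 hl (q2.trans a1) (by exact_mod_cast a2) (by exact_mod_cast a3), q1,
      Prod.ext (b3.trans q5) q2.symm⟩
  · exfalso
    have yu : D.y u = D.y0 + 1 := by linarith
    have yv : D.y v = D.y0 + 1 := by linarith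
    have g1 : D.y x < D.y u := by rw [q1.2.1]; linarith
    have g2 : D.y u < D.y z := by rw [q1.2.2]; linarith
    rcases D.hmid x z u h2 g1 g2 with e | e
    · have := q1.right yu e
      have : (D.pos x + D.pos z : ℝ) < 2 * D.pos u := by exact_mod_cast this
      linarith
    rcases D.hmid x z v h2 (by linarith) (by linarith) with e' | e'
    · exact D.hcross u v x z h1 l1 hl h2 g1 g2 e e'
    · have := q1.left yv e'
      have : (2 * D.pos v : ℝ) < D.pos x + D.pos z := by exact_mod_cast this
      linarith

lemma hor_hor {u v x z : V} (h1 : G.Adj u v) (l1 : D.y u = D.y v) (hl : D.b u < D.a v)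
    (h2 : G.Adj x z) (l2 : D.y x = D.y z) (hl' : D.b x < D.a z) (hne : ¬ (u = x ∧ v = z)) {p : Pt}
    (hp : p ∈ segment ℝ (D.P u) (D.P v)) (hp' : p ∈ segment ℝ (D.P x) (D.P z)) :
    ∃ w, (w = u ∨ w = v) ∧ (w = x ∨ w = z) ∧ p = D.P w := by
  obtain ⟨a1, a2, a3⟩ := D.seg_hor l1 hl hp
  obtain ⟨b1, b2, b3⟩ := D.seg_hor l2 hl' hp'
  have yy : D.y x = D.y u := b1.symm.trans a1
  have i1 : D.pos u ≤ D.pos z := by exact_mod_cast a2.trans b3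
  have i2 : D.pos x ≤ D.pos v := by exact_mod_cast b2.trans a3
  have huv := D.pos_lt l1 hl
  have hxz := D.pos_lt l2 hl'
  rcases le_total (D.pos u) (D.pos x) with e | e
  · rcases D.row_cases h1 l1 hl yy e i2 with e1 | e1
    · subst e1
      exfalso
      rcases le_total (D.pos v) (D.pos z) with f | f
      · rcases D.row_cases h2 l2 hl' l1.symm huv.le f with g | g
        · subst g; omega
        · exact hne ⟨rfl, g⟩
      · rcases D.row_cases h1 l1 hl l2.symm hxz.le f with g | g
        · subst g; omega
        · exact hne ⟨rfl, g.symm⟩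
    · subst e1
      exact ⟨x, Or.inr rfl, Or.inl rfl, Prod.ext (le_antisymm a3 b2) b1⟩
  · rcases D.row_cases h2 l2 hl' yy.symm e i1 with e1 | e1
    · subst e1
      exfalso
      rcases le_total (D.pos v) (D.pos z) with f | f
      · rcases D.row_cases h2 l2 hl' l1.symm huv.le f with g | g
        · subst g; omega
        · exact hne ⟨rfl, g⟩
      · rcases D.row_cases h1 l1 hl l2.symm hxz.le f with g | g
        · subst g; omega
        · exact hne ⟨rfl, g.symm⟩
    · subst e1
      exact ⟨u, Or.inl rfl, Or.inr rfl, Prod.ext (le_antisymm b3 a2) a1⟩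

/-- Orientation of an edge: upwards, or left-to-right within a row. -/
def Or (u v : V) : Prop := D.y u < D.y v ∨ (D.y u = D.y v ∧ D.b u < D.a v)

lemma or_or {u v : V} (h : G.Adj u v) : D.Or u v ∨ D.Or v u := by
  rcases lt_trichotomy (D.y u) (D.y v) with e | e | e
  · exact .inl (.inl e)
  · rcases D.hrow u v h.ne e with f | f
    · exact .inl (.inr ⟨e, f⟩)
    · exact .inr (.inr ⟨e.symm, f⟩)
  · exact .inr (.inl e)

lemma edge_edge_or {u v x z : V} (h1 : G.Adj u v) (o1 : D.Or u v) (h2 : G.Adj x z)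
    (o2 : D.Or x z) (hne : ¬ (u = x ∧ v = z)) {p : Pt}
    (hp : p ∈ segment ℝ (D.P u) (D.P v)) (hp' : p ∈ segment ℝ (D.P x) (D.P z)) :
    ∃ w, (w = u ∨ w = v) ∧ (w = x ∨ w = z) ∧ p = D.P w := by
  rcases o1 with o1 | ⟨o1, o1'⟩ <;> rcases o2 with o2 | ⟨o2, o2'⟩
  · exact D.vert_vert h1 o1 h2 o2 hne hp hp'
  · obtain ⟨w, w1, w2, w3⟩ := D.hor_vert h2 o2 o2' h1 o1 hp' hp
    exact ⟨w, w2, w1, w3⟩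
  · exact D.hor_vert h1 o1 o1' h2 o2 hp hp'
  · exact D.hor_hor h1 o1 o1' h2 o2 o2' hne hp hp'

lemma edge_edge {u v x z : V} (h1 : G.Adj u v) (h2 : G.Adj x z) (hne : s(u, v) ≠ s(x, z)) {p : Pt}
    (hp : p ∈ segment ℝ (D.P u) (D.P v)) (hp' : p ∈ segment ℝ (D.P x) (D.P z)) :
    ∃ w, (w = u ∨ w = v) ∧ (w = x ∨ w = z) ∧ p = D.P w := by
  wlog o1 : D.Or u v generalizing u v with H
  · obtain ⟨w, w1, w2⟩ := H h1.symm (by rwa [Sym2.eq_swap]) (by rwa [segment_symm])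
      ((D.or_or h1).resolve_left o1)
    exact ⟨w, w1.symm, w2⟩
  wlog o2 : D.Or x z generalizing x z with H
  · obtain ⟨w, w1, w2, w3⟩ := H h2.symm (by rwa [segment_symm]) (by rwa [Sym2.eq_swap (a := z)])
      ((D.or_or h2).resolve_left o2)
    exact ⟨w, w1, w2.symm, w3⟩
  exact D.edge_edge_or h1 o1 h2 o2 (by rintro ⟨rfl, rfl⟩; exact hne rfl) hp hp'

lemma vertex_edge {u v w : V} (h1 : G.Adj u v) (hp : D.P w ∈ segment ℝ (D.P u) (D.P v)) :
    w = u ∨ w = v := by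
  wlog o1 : D.Or u v generalizing u v with H
  · exact (H h1.symm (by rwa [segment_symm]) ((D.or_or h1).resolve_left o1)).symm
  rcases o1 with o1 | ⟨o1, o1'⟩
  · obtain ⟨a1, a2, a3⟩ := D.seg_vert o1 hp
    simp only [P] at a1 a2 a3
    rcases D.at_level h1 o1 (D.hy w) a1 a2 with ⟨q, q1, q2, q3, q4, q5⟩ | ⟨q1, q2, q3⟩
    · rw [q5] at a3
      have : w = q := D.pos_inj q2.symm (by exact_mod_cast a3)
      rwa [this]
    · exfalso
      rcases D.hmid u v w h1 (by rw [q1.2.1]; linarith) (by rw [q1.2.2]; linarith) with e | e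
      · have := q1.right q2 e
        have : (D.pos u + D.pos v : ℝ) < 2 * D.pos w := by exact_mod_cast this
        linarith
      · have := q1.left q2 e
        have : (2 * D.pos w : ℝ) < D.pos u + D.pos v := by exact_mod_cast this
        linarith
  · obtain ⟨a1, a2, a3⟩ := D.seg_hor o1 o1' hp
    simp only [P] at a1 a2 a3
    exact D.row_cases h1 o1 o1' a1 (by exact_mod_cast a2) (by exact_mod_cast a3)

end Data
end FlatThree

namespace FlatThree

variable {V : Type} {G : SimpleGraph V}

lemma chainSet_pair (p q : Pt) : chainSet [p, q] = segment ℝ p q := by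
  simp [chainSet, chainSegs]

lemma y_int (D : OrthDrawing G) (hint : D.IntCoords) (v : V) : ∃ b : ℤ, (D.box v).y1 = b := by
  have := hint ((D.box v).x1, (D.box v).y1) (by
    left; simp only [mem_iUnion]; exact ⟨v, by simp⟩)
  exact this.2

lemma y_range (D : OrthDrawing G) (hint : D.IntCoords) {y0 : ℤ}
    (hh : ∀ p ∈ D.points, (y0 : ℝ) ≤ p.2 ∧ p.2 ≤ (y0 : ℝ) + ((3 : ℕ) : ℝ) - 1) (v : V) :
    (D.box v).y1 = y0 ∨ (D.box v).y1 = y0 + 1 ∨ (D.box v).y1 = y0 + 2 := by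
  obtain ⟨b, hb⟩ := y_int D hint v
  have := hh ((D.box v).x1, (D.box v).y1) (by
    left; simp only [mem_iUnion]; exact ⟨v, by simp⟩)
  simp only [hb] at this ⊢
  have h1 : y0 ≤ b := by exact_mod_cast this.1
  have h2 : b ≤ y0 + 2 := by
    have h := this.2
    have : (b : ℝ) ≤ y0 + 2 := by push_cast at h; linarith
    exact_mod_cast this
  have : b = y0 ∨ b = y0 + 1 ∨ b = y0 + 2 := by omega
  rcases this with rfl | rfl | rfl <;> simp

/-- The column of an edge. -/
noncomputable def col (D : OrthDrawing G) (u v : V) : ℝ := ((D.chain u v).head?.getD 0).1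

lemma chain_form (D : OrthDrawing G) (hpl : D.IsPlanar) (hflat : D.IsFlat) (hvr : D.IsVR)
    {u v : V} (h : G.Adj u v) : ∃ q : ℝ,
      D.chain u v = [(col D u v, (D.box u).y1), (q, (D.box v).y1)] ∧
      (D.box u).x1 ≤ col D u v ∧ col D u v ≤ (D.box u).x2 ∧
      (D.box v).x1 ≤ q ∧ q ≤ (D.box v).x2 ∧
      ((D.box u).y1 ≠ (D.box v).y1 → q = col D u v) ∧
      D.curve u v = segment ℝ (col D u v, (D.box u).y1) (q, (D.box v).y1) := by
  obtain ⟨p, q, l, hl, hp, hq⟩ := hpl.2.2.1 u v h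
  have hlen := hvr u v h
  have ho := (hpl.2.1 u v h).2.1
  rw [hl] at hlen
  have : l = [] := by
    simp at hlen; exact hlen
  subst this
  have hcol : col D u v = p.1 := by simp [col, hl]
  have fu := hflat u
  have fv := hflat v
  simp only [Box.pts, mem_prod, mem_Icc] at hp hq
  have hp2 : p.2 = (D.box u).y1 := le_antisymm (by rw [fu]; exact hp.2.2) hp.2.1
  have hq2 : q.2 = (D.box v).y1 := le_antisymm (by rw [fv]; exact hq.2.2) hq.2.1
  have hch : D.chain u v = [(col D u v, (D.box u).y1), (q.1, (D.box v).y1)] := by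
    rw [hl, hcol, ← hp2, ← hq2]; rfl
  refine ⟨q.1, hch, ?_, ?_, hq.1.1, hq.1.2, ?_, ?_⟩
  · rw [hcol]; exact hp.1.1
  · rw [hcol]; exact hp.1.2
  · intro hne
    have := ho (p, q) (by rw [hl]; simp [chainSegs])
    rcases this with e | e
    · rw [hcol]; exact e.symm
    · exact absurd (by rw [← hp2, ← hq2]; exact e) hne
  · rw [OrthDrawing.curve, hch, chainSet_pair]

lemma mem_vseg {c y1 y2 k : ℝ} (h1 : y1 ≤ k) (h2 : k ≤ y2) :
    ((c, k) : Pt) ∈ segment ℝ ((c, y1) : Pt) (c, y2) := by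
  have : ((c, k) : Pt) ∈ (fun t => ((c, t) : Pt)) '' segment ℝ y1 y2 :=
    ⟨k, by rw [segment_eq_Icc (h1.trans h2)]; exact ⟨h1, h2⟩, rfl⟩
  rwa [Prod.image_mk_segment_right] at this

lemma mem_hseg {c x1 x2 k : ℝ} (h1 : x1 ≤ k) (h2 : k ≤ x2) :
    ((k, c) : Pt) ∈ segment ℝ ((x1, c) : Pt) (x2, c) := by
  have : ((k, c) : Pt) ∈ (fun t => ((t, c) : Pt)) '' segment ℝ x1 x2 :=
    ⟨k, by rw [segment_eq_Icc (h1.trans h2)]; exact ⟨h1, h2⟩, rfl⟩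
  rwa [Prod.image_mk_segment_left] at this

lemma exists_data (D : OrthDrawing G) (hpl : D.IsPlanar) (hflat : D.IsFlat) (hvr : D.IsVR)
    (hint : D.IntCoords) (hh : D.InHeight 3) :
    ∃ E : Data G, (∀ v, E.a v = (D.box v).x1) ∧ (∀ v, E.b v = (D.box v).x2) ∧
      ∀ v, E.y v = (D.box v).y1 := by
  obtain ⟨y0, hh⟩ := hh
  have cf := fun u v (h : G.Adj u v) => chain_form D hpl hflat hvr h
  have hbox : ∀ w k, (D.box w).x1 ≤ k → k ≤ (D.box w).x2 → (k, (D.box w).y1) ∈ (D.box w).pts := by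
    intro w k h1 h2
    simp only [Box.pts, mem_prod, mem_Icc]
    exact ⟨⟨h1, h2⟩, le_rfl, (D.box w).hy⟩
  refine ⟨{ a := fun v => (D.box v).x1, b := fun v => (D.box v).x2, y := fun v => (D.box v).y1,
            c := col D, y0 := y0, hab := fun v => (D.box v).hx, hrow := ?_,
            hy := y_range D hint hh, hc := ?_, hmid := ?_, hsame := ?_, hhor := ?_, hcross := ?_ },
    fun _ => rfl, fun _ => rfl, fun _ => rfl⟩
  · intro u v hne hy
    by_contra hcon
    push Not at hcon
    have hd := hpl.1 u v hne
    rw [Set.disjoint_left] at hd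
    have hu := (D.box u).hx
    have hv := (D.box v).hx
    have m1 := hbox u (max (D.box u).x1 (D.box v).x1) (le_max_left _ _) (max_le hu hcon.1)
    have m2 := hbox v (max (D.box u).x1 (D.box v).x1) (le_max_right _ _) (max_le hcon.2 hv)
    rw [← hy] at m2
    exact hd m1 m2
  · intro u v h hlt
    obtain ⟨q, q1, q2, q3, q4, q5, q6, q7⟩ := cf u v h
    rw [q6 hlt.ne] at q4 q5
    exact ⟨q2, q3, q4, q5⟩
  · intro u v w h h1 h2
    obtain ⟨q, q1, q2, q3, q4, q5, q6, q7⟩ := cf u v h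
    have e := q6 (h1.trans h2).ne
    subst e
    by_contra hcon
    push Not at hcon
    have := Set.mem_of_subset_of_mem (hpl.2.2.2.1 u v w h) (a := (col D u v, (D.box w).y1))
      ⟨by rw [q7]; exact mem_vseg h1.le h2.le, hbox w _ hcon.1 hcon.2⟩
    rcases this with ⟨e, _⟩ | ⟨e, _⟩
    · subst e; exact lt_irrefl _ h1
    · subst e; exact lt_irrefl _ h2
  · intro u v x z h1 l1 h2 l2 hne hc k k1 k2 k3 k4
    obtain ⟨q, q1, q2, q3, q4, q5, q6, q7⟩ := cf u v h1
    obtain ⟨r, r1, r2, r3, r4, r5, r6, r7⟩ := cf x z h2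
    have e := q6 l1.ne
    subst e
    have e := r6 l2.ne
    subst e
    have hs : s(u, v) ≠ s(x, z) := by
      intro e
      rw [Sym2.eq_iff] at e
      rcases e with e | ⟨rfl, rfl⟩
      · exact hne e
      · exact lt_asymm l1 l2
    have := Set.mem_of_subset_of_mem (hpl.2.2.2.2 u v x z h1 h2 hs) (a := (col D u v, k))
      ⟨by rw [q7]; exact mem_vseg k1 k2, by rw [r7, hc]; exact mem_vseg k3 k4⟩
    rw [q1, r1] at this
    simp at this
    constructor
    · rcases this.1 with e | e
      · exact Or.inl e.symm
      · exact Or.inr e.symm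
    · rcases this.2 with e | e
      · exact Or.inl e.2.symm
      · exact Or.inr e.2.symm
  · intro u v w h hy hl hw h1 h2
    obtain ⟨q, q1, q2, q3, q4, q5, q6, q7⟩ := cf u v h
    have hx := (D.box w).hx
    have := Set.mem_of_subset_of_mem (hpl.2.2.2.1 u v w h) (a := ((D.box w).x1, (D.box w).y1))
      ⟨by rw [q7, ← hy, hw]; exact mem_hseg (by linarith) (by linarith), hbox w _ le_rfl hx⟩
    rcases this with ⟨e, _⟩ | ⟨e, _⟩
    · subst e; linarith
    · subst e; linarith
  · intro u v x z h hy hl h2 l1 l2 k1 k2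
    obtain ⟨q, q1, q2, q3, q4, q5, q6, q7⟩ := cf u v h
    obtain ⟨r, r1, r2, r3, r4, r5, r6, r7⟩ := cf x z h2
    have e := r6 (l1.trans l2).ne
    subst e
    have hs : s(u, v) ≠ s(x, z) := by
      intro e
      rw [Sym2.eq_iff] at e
      rcases e with ⟨rfl, rfl⟩ | ⟨rfl, rfl⟩
      · exact lt_irrefl _ l1
      · exact lt_irrefl _ l2
    have := Set.mem_of_subset_of_mem (hpl.2.2.2.2 u v x z h h2 hs) (a := (col D x z, (D.box u).y1))
      ⟨by rw [q7, ← hy]; exact mem_hseg (by linarith) (by linarith),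
        by rw [r7]; exact mem_vseg l1.le l2.le⟩
    rw [r1] at this
    simp at this
    rcases this.2 with e | e <;> linarith

end FlatThree

/-- There is an absolute constant `c` such that any planar flat
visibility representation of height `3` of a finite simple graph `G` with `n` vertices
can be transformed into a planar straight-line drawing with the same y-coordinates,
the same left-to-right order in each row, and width at most `c·n`. -/
theorem flatVR_height_three_to_straightLine_linear_width :
    ∃ c : ℕ, ∀ (V : Type) [Fintype V], ∀ (G : SimpleGraph V) (D : OrthDrawing G),
      D.IsPlanar → D.IsFlat → D.IsVR → D.IntCoords → D.InHeight 3 →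
      ∃ D' : PolylineDrawing G, D'.IsPlanar ∧ D'.IsStraightLine ∧ D'.IntCoords ∧
        (∀ v, (D'.pos v).2 = (D.box v).y1) ∧
        (∀ v w : V, (D.box v).y1 = (D.box w).y1 → (D.box v).x2 < (D.box w).x1 →
          (D'.pos v).1 < (D'.pos w).1) ∧
        D'.InWidth (c * Fintype.card V) := by
  refine ⟨4, ?_⟩
  intro V _ G D hpl hflat hvr hint hh
  obtain ⟨E, ha, hb, hy⟩ := FlatThree.exists_data D hpl hflat hvr hint hh
  have hcurve : ∀ u v : V, chainSet [E.P u, E.P v] = segment ℝ (E.P u) (E.P v) :=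
    fun u v => FlatThree.chainSet_pair _ _
  refine ⟨⟨E.P, fun _ _ => [], fun _ _ => rfl⟩, ⟨?_, ?_, ?_, ?_⟩, fun _ _ => rfl, ?_, ?_, ?_, ?_⟩
  · exact fun u v h => E.P_inj h
  · intro u v h
    refine ⟨⟨?_, ?_, ?_⟩, ?_⟩
    · simp [PolylineDrawing.chain]
    · simp only [PolylineDrawing.chain, List.nil_append, List.nodup_cons, List.mem_singleton,
        List.not_mem_nil, not_false_eq_true, List.nodup_nil, and_true]
      exact fun e => h.ne (E.P_inj e)
    · intro i j hij hi hj
      simp [PolylineDrawing.chain, chainSegs] at hi hj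
      omega
    · intro i hi
      simp [PolylineDrawing.chain] at hi
  · intro u v w h h1 h2 hw
    simp only [PolylineDrawing.curve, PolylineDrawing.chain, List.nil_append, hcurve] at hw
    rcases E.vertex_edge h hw with e | e
    · exact h1 e
    · exact h2 e
  · intro u v x z h1 h2 hne p hp
    simp only [PolylineDrawing.curve, PolylineDrawing.chain, List.nil_append, hcurve] at hp
    obtain ⟨w, w1, w2, w3⟩ := E.edge_edge h1 h2 hne hp.1 hp.2
    exact ⟨w, ⟨w1, w2⟩, w3.symm⟩
  · intro p hp
    simp [PolylineDrawing.points] at hp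
    obtain ⟨v, rfl⟩ := hp
    obtain ⟨b, hb⟩ := FlatThree.y_int D hint v
    exact ⟨⟨(E.pos v : ℤ), by simp [FlatThree.Data.P]⟩, ⟨b, by simp [FlatThree.Data.P, hy, hb]⟩⟩
  · intro v
    simp [FlatThree.Data.P, hy]
  · intro v w h1 h2
    simp only [FlatThree.Data.P, Nat.cast_lt]
    exact E.pos_lt (by rw [hy, hy, h1]) (by rw [ha, hb]; exact h2)
  · refine ⟨0, ?_⟩
    intro p hp
    simp [PolylineDrawing.points] at hp
    obtain ⟨v, rfl⟩ := hp
    have h1 := E.pos_le v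
    have hn : 0 < Fintype.card V := Fintype.card_pos_iff.2 ⟨v⟩
    have h2 : E.pos v + 1 ≤ 4 * Fintype.card V := by omega
    have h3 : (E.pos v : ℝ) + 1 ≤ ((4 * Fintype.card V : ℕ) : ℝ) := by exact_mod_cast h2
    simp only [FlatThree.Data.P]
    refine ⟨by simp, ?_⟩
    simp only [Int.cast_zero]
    linarith
end
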